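/- arXiv:0811.3072 — 9 statements merged into one kernel-verified Lean document; each statement's English description precedes it below -/
import Mathlib

section
/- Let A and B be C*-algebras, D : A → B a linear map with ‖D(a)‖ ≤ ‖a‖ for all a ∈ A, and W : B → A a *-homomorphism such that W(D(a)) = a for every a ∈ A. Assume moreover that B equals the smallest closed *-subalgebra of B containing D(A). Then ker W coincides with the quasicommutator ideal of B, i.e. with the smallest closed two-sided ideal of B containing all elements D(a₁)D(a₂) − D(a₁a₂) with a₁, a₂ ∈ A. -/
section Aux

open Filter Topology

theorem aux_hered {B : Type*} [NonUnitalCStarAlgebra B] [PartialOrder B] [StarOrderedRing B]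
    (J : Submodule ℂ B) (hJ : IsClosed (J : Set B))
    (hm : ∀ (b : B), ∀ x ∈ J, b * x ∈ J ∧ x * b ∈ J)
    (z j : B) (hj : j ∈ J) (hz : star z * z ≤ j) : z ∈ J := by
  have hj0 : 0 ≤ j := (star_mul_self_nonneg z).trans hz
  have hjs : IsSelfAdjoint j := IsSelfAdjoint.of_nonneg hj0
  obtain ⟨w, hw⟩ := CStarAlgebra.nonneg_iff_eq_star_mul_self.mp (sub_nonneg.mpr hz)
  have key : ∀ ε : ℝ, 0 < ε → ∃ y ∈ J, ‖z - y‖ * ‖z - y‖ ≤ ε := by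
    intro ε hε
    have hpos : ∀ t : ℝ, 0 < t ^ 2 + ε ^ 2 := fun t => by positivity
    have hk : Continuous (fun t : ℝ => t / (t ^ 2 + ε ^ 2)) :=
      Continuous.div (by fun_prop) (by fun_prop) (fun t => (hpos t).ne')
    set k := cfcₙ (fun t : ℝ => t / (t ^ 2 + ε ^ 2)) j with hkdef
    have hg : j * k = cfcₙ (fun t : ℝ => t * (t / (t ^ 2 + ε ^ 2))) j := by
      rw [cfcₙ_mul (fun t : ℝ => t) (fun t : ℝ => t / (t ^ 2 + ε ^ 2)) j (by fun_prop) rfl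
        hk.continuousOn (by simp), cfcₙ_id' ℝ j]
    have hgs : star (j * k) = j * k := by
      rw [hg]; exact IsSelfAdjoint.cfcₙ
    refine ⟨z * (j * k), (hm _ _ (hm _ _ hj).2).1, ?_⟩
    set g := j * k with hgdef
    have hgc : Continuous (fun t : ℝ => t * (t / (t ^ 2 + ε ^ 2))) := continuous_id.mul hk
    have e1 : j - g * j - j * g + g * j * g =
        cfcₙ (fun t : ℝ => t * (1 - t * (t / (t ^ 2 + ε ^ 2))) ^ 2) j := by
      have h1 : g * j = cfcₙ (fun t : ℝ => t * (t / (t ^ 2 + ε ^ 2)) * t) j := by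
        rw [cfcₙ_mul (fun t : ℝ => t * (t / (t ^ 2 + ε ^ 2))) (fun t : ℝ => t) j
          hgc.continuousOn (by simp) (by fun_prop) rfl, cfcₙ_id' ℝ j, hg]
      have h2 : j * g = cfcₙ (fun t : ℝ => t * (t * (t / (t ^ 2 + ε ^ 2)))) j := by
        rw [cfcₙ_mul (fun t : ℝ => t) (fun t : ℝ => t * (t / (t ^ 2 + ε ^ 2))) j
           (by fun_prop) rfl hgc.continuousOn (by simp), cfcₙ_id' ℝ j, hg]
      have h3 : g * j * g = cfcₙ (fun t : ℝ => t * (t / (t ^ 2 + ε ^ 2)) * t *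
          (t * (t / (t ^ 2 + ε ^ 2)))) j := by
        rw [cfcₙ_mul (fun t : ℝ => t * (t / (t ^ 2 + ε ^ 2)) * t)
          (fun t : ℝ => t * (t / (t ^ 2 + ε ^ 2))) j
          (hgc.mul continuous_id).continuousOn (by simp) hgc.continuousOn (by simp), ← h1, ← hg]
      have h4 : j - g * j = cfcₙ (fun t : ℝ => t - t * (t / (t ^ 2 + ε ^ 2)) * t) j := by
        rw [cfcₙ_sub (fun t : ℝ => t) (fun t : ℝ => t * (t / (t ^ 2 + ε ^ 2)) * t) j
          (by fun_prop) rfl (hgc.mul continuous_id).continuousOn (by simp), cfcₙ_id' ℝ j, h1]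
      have h5 : j - g * j - j * g = cfcₙ (fun t : ℝ => t - t * (t / (t ^ 2 + ε ^ 2)) * t
          - t * (t * (t / (t ^ 2 + ε ^ 2)))) j := by
        rw [cfcₙ_sub (fun t : ℝ => t - t * (t / (t ^ 2 + ε ^ 2)) * t)
          (fun t : ℝ => t * (t * (t / (t ^ 2 + ε ^ 2)))) j
          (continuous_id.sub (hgc.mul continuous_id)).continuousOn (by simp)
          (continuous_id.mul hgc).continuousOn (by simp), ← h4, ← h2]
      rw [h5, h3, ← cfcₙ_add (fun t : ℝ => t - t * (t / (t ^ 2 + ε ^ 2)) * t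
            - t * (t * (t / (t ^ 2 + ε ^ 2)))) (fun t : ℝ => t * (t / (t ^ 2 + ε ^ 2)) * t *
          (t * (t / (t ^ 2 + ε ^ 2)))) j
          ((continuous_id.sub (hgc.mul continuous_id)).sub (continuous_id.mul hgc)).continuousOn
          (by simp) ((hgc.mul continuous_id).mul hgc).continuousOn (by simp)]
      congr 1
      ext t
      ring
    have e2 : star (z - z * g) * (z - z * g) + star (w - w * g) * (w - w * g) =
        j - g * j - j * g + g * j * g := by
      have : j = star z * z + star w * w := by rw [← hw]; abel
      simp only [star_sub, star_mul, hgs]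
      rw [this]
      simp only [mul_sub, sub_mul, mul_add, add_mul, mul_assoc]
      abel
    have e3 : star (z - z * g) * (z - z * g) ≤ j - g * j - j * g + g * j * g := by
      rw [← e2]; exact le_add_of_nonneg_right (star_mul_self_nonneg _)
    rw [← CStarRing.norm_star_mul_self]
    refine (CStarAlgebra.norm_le_norm_of_nonneg_of_le (star_mul_self_nonneg _) e3).trans ?_
    rw [e1]
    refine norm_cfcₙ_le fun t ht => ?_
    have ht0 : 0 ≤ t := quasispectrum_nonneg_of_nonneg j hj0 t ht
    have e4 : 1 - t * (t / (t ^ 2 + ε ^ 2)) = ε ^ 2 / (t ^ 2 + ε ^ 2) := by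
      have := (hpos t).ne'
      field_simp
      ring
    rw [e4, Real.norm_of_nonneg (by positivity)]
    have e5 : ε ^ 2 / (t ^ 2 + ε ^ 2) ≤ 1 := by
      rw [div_le_one (hpos t)]; nlinarith
    have e6 : t * (ε ^ 2 / (t ^ 2 + ε ^ 2)) ≤ ε := by
      rw [← mul_div_assoc, div_le_iff₀ (hpos t)]
      nlinarith [sq_nonneg (t - ε), mul_nonneg ht0 hε.le, mul_nonneg hε.le (sq_nonneg (t - ε)), pow_pos hε 3, mul_nonneg hε.le (sq_nonneg t)]
    calc t * (ε ^ 2 / (t ^ 2 + ε ^ 2)) ^ 2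
        = (t * (ε ^ 2 / (t ^ 2 + ε ^ 2))) * (ε ^ 2 / (t ^ 2 + ε ^ 2)) := by ring
      _ ≤ ε * 1 := by gcongr
      _ = ε := mul_one _
  have : z ∈ closure (J : Set B) := by
    rw [Metric.mem_closure_iff]
    intro δ hδ
    obtain ⟨y, hy, h⟩ := key (δ ^ 2 / 4) (by positivity)
    refine ⟨y, hy, ?_⟩
    rw [dist_eq_norm]
    nlinarith [norm_nonneg (z - y)]
  rwa [hJ.closure_eq] at this

theorem aux_star {B : Type*} [NonUnitalCStarAlgebra B] [PartialOrder B] [StarOrderedRing B]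
    (J : Submodule ℂ B) (hJ : IsClosed (J : Set B))
    (hm : ∀ (b : B), ∀ x ∈ J, b * x ∈ J ∧ x * b ∈ J)
    (x : B) (hx : x ∈ J) : star x ∈ J :=
  aux_hered J hJ hm (star x) (x * star x) (hm _ _ hx).2 (by simp)

theorem aux_contr {B : Type*} [NonUnitalCStarAlgebra B] [PartialOrder B] [StarOrderedRing B]
    (J : Submodule ℂ B) (hJ : IsClosed (J : Set B))
    (hm : ∀ (b : B), ∀ x ∈ J, b * x ∈ J ∧ x * b ∈ J)
    (U V x y : B) (hU : ‖U‖ ≤ 1) (hV : ‖V‖ ≤ 1) (h1 : x - U * y ∈ J) (h2 : y - V * x ∈ J) :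
    star U * x - y ∈ J := by
  have hs := aux_star J hJ hm
  have p1 : star x * (U * star U) * x ≤ star x * x := by
    refine (CStarAlgebra.star_left_conjugate_le_norm_smul (IsSelfAdjoint.mul_star_self U)).trans ?_
    have : ‖U * star U‖ ≤ 1 := by
      rw [CStarRing.norm_self_mul_star]; nlinarith [norm_nonneg U]
    calc _ ≤ (1 : ℝ) • (star x * x) :=
          smul_le_smul_of_nonneg_right this (star_mul_self_nonneg x)
      _ = _ := one_smul _ _
  have p2 : star x * (star V * V) * x ≤ star x * x := by
    refine (CStarAlgebra.star_left_conjugate_le_norm_smul (IsSelfAdjoint.star_mul_self V)).trans ?_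
    have : ‖star V * V‖ ≤ 1 := by
      rw [CStarRing.norm_star_mul_self]; nlinarith [norm_nonneg V]
    calc _ ≤ (1 : ℝ) • (star x * x) :=
          smul_le_smul_of_nonneg_right this (star_mul_self_nonneg x)
      _ = _ := one_smul _ _
  set z := star U * x - y with hz
  set p := (star x * x - star x * (U * star U) * x) + (star x * x - star x * (star V * V) * x)
    with hp
  have hp0 : 0 ≤ p := add_nonneg (sub_nonneg.mpr p1) (sub_nonneg.mpr p2)
  refine aux_hered J hJ hm z (star z * z + p) ?_ (le_add_of_nonneg_right hp0)
  have q1 := (hm (star x) _ h1).1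
  have q2 := hs _ q1
  have q3 := (hm (star y) _ h2).1
  have q4 := (hm (V * x) _ (hs _ h2)).2
  have : star z * z + p = star x * (x - U * y) + star (star x * (x - U * y))
      + star y * (y - V * x) + star (y - V * x) * (V * x) := by
    rw [hz, hp]
    simp only [star_sub, star_mul, star_star, mul_sub, sub_mul, mul_assoc]
    abel
  rw [this]
  exact J.add_mem (J.add_mem (J.add_mem q1 q2) q3) q4

theorem aux_approx {A : Type*} [NonUnitalCStarAlgebra A] (h : A) (hh : IsSelfAdjoint h)
    (hn : ‖h‖ ≤ 1) (δ : ℝ) (hδ : 0 < δ) :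
    ∃ c s : A, IsSelfAdjoint c ∧ IsSelfAdjoint s ∧ c * s = s * c ∧ (c * c + s * s) * c = c ∧
      ‖c * c + s * s‖ ≤ 1 ∧ ‖h - c‖ ≤ δ := by
  set f : ℝ → ℝ := fun t => t - max (-δ) (min δ t) with hf
  set e : ℝ → ℝ := fun t => min 1 (|t| / δ) with he
  set g : ℝ → ℝ := fun t => e t * √(1 - f t ^ 2) with hg
  have fc : Continuous f := by fun_prop
  have ec : Continuous e := by
    have : Continuous fun t : ℝ => |t| / δ := by fun_prop
    fun_prop
  have gc : Continuous g := by fun_prop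
  have f0 : f 0 = 0 := by simp [hf, hδ.le]
  have e0 : e 0 = 0 := by simp [he]
  have g0 : g 0 = 0 := by simp [hg, e0]
  have spec : ∀ t ∈ quasispectrum ℝ h, |t| ≤ 1 := by
    intro t ht
    have := norm_apply_le_norm_cfcₙ (fun t : ℝ => t) h ht (by fun_prop) rfl hh
    rw [cfcₙ_id' ℝ h] at this
    exact this.trans hn
  have hef : ∀ t, e t * f t = f t := by
    intro t
    by_cases ht : |t| ≤ δ
    · have : f t = 0 := by
        have := abs_le.mp ht
        simp [hf, min_eq_right this.2, max_eq_right this.1]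
      simp [this]
    · have : e t = 1 := by
        simp only [he]
        rw [min_eq_left]
        rw [le_div_iff₀ hδ]; linarith
      rw [this, one_mul]
  have hf1 : ∀ t, |t| ≤ 1 → f t ^ 2 ≤ 1 := by
    intro t ht
    rw [sq_le_one_iff_abs_le_one]
    have := abs_le.mp ht
    rw [abs_le]
    simp only [hf]
    constructor <;> rcases max_cases (-δ) (min δ t) with h | h <;>
      rcases min_cases δ t with h' | h' <;> linarith
  have he01 : ∀ t, 0 ≤ e t ∧ e t ≤ 1 := fun t => ⟨by simp only [he]; positivity, min_le_left _ _⟩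
  have hsum : ∀ t ∈ quasispectrum ℝ h, f t * f t + g t * g t = e t * e t := by
    intro t ht
    have h1 := hf1 t (spec t ht)
    have h2 := Real.mul_self_sqrt (sub_nonneg.mpr h1)
    simp only [hg]
    calc f t * f t + e t * √(1 - f t ^ 2) * (e t * √(1 - f t ^ 2))
        = f t * f t + e t * e t * (√(1 - f t ^ 2) * √(1 - f t ^ 2)) := by ring
      _ = f t * f t - (e t * f t) * (e t * f t) + e t * e t := by rw [h2]; ring
      _ = _ := by rw [hef]; ring
  have S : cfcₙ f h * cfcₙ f h + cfcₙ g h * cfcₙ g h = cfcₙ (fun t => e t * e t) h := by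
    rw [← cfcₙ_mul f f h fc.continuousOn f0 fc.continuousOn f0,
      ← cfcₙ_mul g g h gc.continuousOn g0 gc.continuousOn g0,
      ← cfcₙ_add (fun t => f t * f t) (fun t => g t * g t) h (fc.mul fc).continuousOn (by simp [f0])
        (gc.mul gc).continuousOn (by simp [g0])]
    exact cfcₙ_congr hsum
  refine ⟨cfcₙ f h, cfcₙ g h, IsSelfAdjoint.cfcₙ, IsSelfAdjoint.cfcₙ, cfcₙ_commute_cfcₙ f g h,
    ?_, ?_, ?_⟩
  · rw [S, ← cfcₙ_mul (fun t => e t * e t) f h (ec.mul ec).continuousOn (by simp [e0])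
      fc.continuousOn f0]
    congr 1
    ext t
    rw [mul_assoc, hef, hef]
  · rw [S]
    refine norm_cfcₙ_le fun t _ => ?_
    have := he01 t
    rw [Real.norm_of_nonneg (mul_nonneg this.1 this.1)]
    nlinarith
  · have : h - cfcₙ f h = cfcₙ (fun t => t - f t) h := by
      rw [cfcₙ_sub (fun t => t) f h (by fun_prop) rfl fc.continuousOn f0, cfcₙ_id' ℝ h]
    rw [this]
    refine norm_cfcₙ_le fun t _ => ?_
    rw [Real.norm_eq_abs, abs_le]
    simp only [hf, sub_sub_cancel]
    exact ⟨le_max_left _ _, max_le (by linarith) (min_le_left _ _)⟩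

theorem aux_sa {A B : Type*} [NonUnitalCStarAlgebra A] [NonUnitalCStarAlgebra B]
    (J : Submodule ℂ B) (hJ : IsClosed (J : Set B))
    (hm : ∀ (b : B), ∀ x ∈ J, b * x ∈ J ∧ x * b ∈ J)
    (D : A →ₗ[ℂ] B) (hD : ∀ a : A, ‖D a‖ ≤ ‖a‖)
    (hq : ∀ a b : A, D a * D b - D (a * b) ∈ J) (c s : A)
    (hc : IsSelfAdjoint c) (hs : IsSelfAdjoint s) (hcs : c * s = s * c)
    (hu : (c * c + s * s) * c = c) (hn : ‖c * c + s * s‖ ≤ 1) : D c - star (D c) ∈ J := by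
  letI : PartialOrder B := CStarAlgebra.spectralOrder B
  haveI : StarOrderedRing B := CStarAlgebra.spectralOrderedRing B
  have hst := aux_star J hJ hm
  have step : ∀ s : A, IsSelfAdjoint s → c * s = s * c → (c * c + s * s) * c = c →
      ‖c * c + s * s‖ ≤ 1 →
      star (D (c + Complex.I • s)) * D c - D ((c - Complex.I • s) * c) ∈ J := by
    intro s hs hcs hu hn
    have m1 : (c + Complex.I • s) * (c - Complex.I • s) = c * c + s * s := by
      simp only [mul_sub, add_mul, smul_mul_assoc, mul_smul_comm, smul_smul, Complex.I_mul_I, hcs,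
        neg_smul, one_smul, smul_add, smul_neg]
      abel
    have m2 : (c - Complex.I • s) * (c + Complex.I • s) = c * c + s * s := by
      simp only [mul_add, sub_mul, smul_mul_assoc, mul_smul_comm, smul_smul, Complex.I_mul_I, hcs,
        neg_smul, one_smul, smul_sub, smul_neg]
      abel
    have st : star (c + Complex.I • s) = c - Complex.I • s := by
      simp [hc.star_eq, hs.star_eq, sub_eq_add_neg]
    have n1 : ‖c + Complex.I • s‖ ≤ 1 := by
      have : ‖c + Complex.I • s‖ * ‖c + Complex.I • s‖ ≤ 1 := by
        rw [← CStarRing.norm_star_mul_self, st, m2]; exact hn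
      nlinarith [norm_nonneg (c + Complex.I • s)]
    have n2 : ‖c - Complex.I • s‖ ≤ 1 := by rw [← st, norm_star]; exact n1
    refine aux_contr J hJ hm _ (D (c - Complex.I • s)) _ _ ((hD _).trans n1) ((hD _).trans n2) ?_ ?_
    · have := J.neg_mem (hq (c + Complex.I • s) ((c - Complex.I • s) * c))
      rw [← mul_assoc, m1, hu, neg_sub] at this
      exact this
    · have := J.neg_mem (hq (c - Complex.I • s) c)
      rwa [neg_sub] at this
  have s1 := step s hs hcs hu hn
  have s2 := step (-s) hs.neg (by simp [hcs]) (by simpa using hu) (by simpa using hn)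
  have s3 := J.smul_mem (2⁻¹ : ℂ) (J.add_mem s1 s2)
  set K := D c with hK
  have s4 : star K * K - D (c * c) ∈ J := by
    convert s3 using 1
    have : ∀ x : B, x = (2⁻¹ : ℂ) • (x + x) := fun x => by
      rw [← two_smul ℂ x, smul_smul]; norm_num
    rw [this (star K * K - D (c * c))]
    congr 1
    simp only [map_add, map_sub, map_neg, smul_neg, sub_mul, neg_mul, star_add, star_neg, add_mul, ← hK]
    abel
  have s5 : star K * K - K * K ∈ J := by
    have := J.sub_mem s4 (hq c c)
    rwa [sub_sub_sub_cancel_right] at this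
  have s6 : star K * K - star K * star K ∈ J := by
    have := hst _ s5
    simpa using this
  set z := K - star K with hz
  have zs : star z = -z := by simp [hz]
  have r1 : star K * z ∈ J := by rw [hz, mul_sub]; exact s6
  have r2 : z * K ∈ J := by
    have := J.neg_mem s5
    rw [hz, sub_mul]; rwa [neg_sub] at this
  have r3 : z * z * z ∈ J := by
    have : z * z * z = z * K * z - z * (star K * z) := by
      rw [← mul_assoc, ← sub_mul, ← mul_sub]
    rw [this]
    exact J.sub_mem (hm _ _ r2).2 (hm _ _ r1).1
  have r4 : star z * z ∈ J := by
    refine aux_hered J hJ hm _ (star (star z * z) * (star z * z)) ?_ le_rfl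
    have : star (star z * z) * (star z * z) = z * z * z * z := by
      rw [star_mul, star_star, zs]
      simp [mul_assoc]
    rw [this]
    exact (hm _ _ r3).2
  exact aux_hered J hJ hm _ _ r4 le_rfl

theorem aux_Dstar {A B : Type*} [NonUnitalCStarAlgebra A] [NonUnitalCStarAlgebra B]
    (J : Submodule ℂ B) (hJ : IsClosed (J : Set B))
    (hm : ∀ (b : B), ∀ x ∈ J, b * x ∈ J ∧ x * b ∈ J)
    (D : A →ₗ[ℂ] B) (hD : ∀ a : A, ‖D a‖ ≤ ‖a‖)
    (hq : ∀ a b : A, D a * D b - D (a * b) ∈ J) (a : A) : D (star a) - star (D a) ∈ J := by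
  have Dc : Continuous D :=
    (D.mkContinuous 1 (fun a => by simpa using hD a)).continuous
  have h1 : ∀ h : A, IsSelfAdjoint h → ‖h‖ ≤ 1 → D h - star (D h) ∈ J := by
    intro h hh hn
    have hcl : IsClosed {a : A | D a - star (D a) ∈ J} :=
      hJ.preimage (Dc.sub Dc.star)
    have : h ∈ closure {a : A | D a - star (D a) ∈ J} := by
      rw [Metric.mem_closure_iff]
      intro δ hδ
      obtain ⟨c, s, hc, hs, hcs, hu, hn, hd⟩ := aux_approx h hh hn (δ / 2) (by positivity)
      refine ⟨c, aux_sa J hJ hm D hD hq c s hc hs hcs hu hn, ?_⟩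
      rw [dist_eq_norm]; linarith
    rwa [hcl.closure_eq] at this
  have h2 : ∀ h : A, IsSelfAdjoint h → D h - star (D h) ∈ J := by
    intro h hh
    set r : ℝ := ‖h‖ + 1 with hr
    have r0 : 0 < r := by positivity
    have sa : star ((r : ℂ)⁻¹ • h) = (r : ℂ)⁻¹ • h := by
      simp [star_smul, hh.star_eq]
    have := h1 ((r : ℂ)⁻¹ • h) sa (by
      rw [norm_smul, norm_inv, Complex.norm_real, Real.norm_of_nonneg r0.le,
        inv_mul_le_one₀ r0]
      linarith)
    have := J.smul_mem (r : ℂ) this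
    have rc : (r : ℂ) ≠ 0 := by exact_mod_cast r0.ne'
    simpa [smul_sub, star_smul, smul_smul, rc] using this
  have p1 := h2 (a + star a) (by simp [IsSelfAdjoint, add_comm])
  have p2 := h2 (Complex.I • (a - star a)) (by
    simp only [IsSelfAdjoint, star_smul, star_sub, star_star, Complex.star_def, Complex.conj_I,
      neg_smul, ← smul_neg, neg_sub])
  have p3 := J.smul_mem (2⁻¹ : ℂ) (J.add_mem p1 (J.smul_mem Complex.I p2))
  convert p3 using 1
  have : ∀ x : B, x = (2⁻¹ : ℂ) • (x + x) := fun x => by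
    rw [← two_smul ℂ x, smul_smul]; norm_num
  rw [this (D (star a) - star (D a))]
  congr 1
  simp only [map_add, map_sub, map_smul, star_add, star_sub, star_smul, smul_sub, smul_smul,
    Complex.star_def, Complex.conj_I, mul_neg, Complex.I_mul_I, neg_smul, one_smul, neg_neg, smul_neg]
  abel

theorem aux_main {A B : Type*} [NonUnitalCStarAlgebra A] [NonUnitalCStarAlgebra B]
    (J : Submodule ℂ B) (hJ : IsClosed (J : Set B))
    (hm : ∀ (b : B), ∀ x ∈ J, b * x ∈ J ∧ x * b ∈ J)
    (D : A →ₗ[ℂ] B) (hD : ∀ a : A, ‖D a‖ ≤ ‖a‖)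
    (W : B →⋆ₙₐ[ℂ] A) (hWD : ∀ a : A, W (D a) = a)
    (hgen : (NonUnitalStarAlgebra.adjoin ℂ (Set.range D)).topologicalClosure = ⊤)
    (hq : ∀ a b : A, D a * D b - D (a * b) ∈ J) (b : B) : b - D (W b) ∈ J := by
  letI : PartialOrder B := CStarAlgebra.spectralOrder B
  haveI : StarOrderedRing B := CStarAlgebra.spectralOrderedRing B
  have hst := aux_star J hJ hm
  have Dc : Continuous D :=
    (D.mkContinuous 1 (fun a => by simpa using hD a)).continuous
  have Wc : Continuous W := AddMonoidHomClass.continuous_of_bound W 1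
    (fun x => by simpa only [one_mul] using NonUnitalStarAlgHom.norm_apply_le W x)
  let S : NonUnitalStarSubalgebra ℂ B :=
    { carrier := {b | b - D (W b) ∈ J}
      zero_mem' := by simp
      add_mem' := by
        intro x y hx hy
        have := J.add_mem hx hy
        simp only [Set.mem_ofPred_eq, map_add]
        rwa [add_sub_add_comm]
      smul_mem' := by
        intro r x hx
        have := J.smul_mem r hx
        simpa [smul_sub] using this
      mul_mem' := by
        intro x y hx hy
        have := J.add_mem (J.add_mem (hm y _ hx).2 (hm (D (W x)) _ hy).1) (hq (W x) (W y))
        simp only [Set.mem_ofPred_eq, map_mul]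
        convert this using 1
        simp only [mul_sub, sub_mul]
        abel
      star_mem' := by
        intro x hx
        have := J.sub_mem (hst _ hx) (aux_Dstar J hJ hm D hD hq (W x))
        simp only [Set.mem_ofPred_eq, map_star] at *
        convert this using 1
        simp only [star_sub]
        abel }
  have hS : IsClosed (S : Set B) := hJ.preimage (continuous_id.sub (Dc.comp Wc))
  have : (NonUnitalStarAlgebra.adjoin ℂ (Set.range D)).topologicalClosure ≤ S := by
    refine NonUnitalStarSubalgebra.topologicalClosure_minimal _
      (NonUnitalStarAlgebra.adjoin_le ?_) hS
    rintro _ ⟨a, rfl⟩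
    change D a - D (W (D a)) ∈ J
    simp [hWD]
  rw [hgen] at this
  exact this (NonUnitalStarAlgebra.mem_top)

end Aux


/-- With `D`, `W` as before, if `B` is the smallest closed *-subalgebra of
itself containing the range of `D`, then the kernel of `W` coincides with the smallest closed
two-sided ideal of `B` containing all quasicommutators `D a₁ * D a₂ - D (a₁ * a₂)`. The
smallest closed ideal is expressed as the intersection of all closed subsets of `B` that
contain the quasicommutators, contain `0`, and are closed under addition, scalar
multiplication, and two-sided multiplication by arbitrary elements of `B`. -/
theorem stmt1 {A B : Type*}
    [NonUnitalNormedRing A] [StarRing A] [CStarRing A] [NormedSpace ℂ A]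
    [IsScalarTower ℂ A A] [SMulCommClass ℂ A A] [StarModule ℂ A] [CompleteSpace A]
    [NonUnitalNormedRing B] [StarRing B] [CStarRing B] [NormedSpace ℂ B]
    [IsScalarTower ℂ B B] [SMulCommClass ℂ B B] [StarModule ℂ B] [CompleteSpace B]
    (D : A →ₗ[ℂ] B) (hD : ∀ a : A, ‖D a‖ ≤ ‖a‖)
    (W : B →⋆ₙₐ[ℂ] A) (hWD : ∀ a : A, W (D a) = a)
    (hgen : (NonUnitalStarAlgebra.adjoin ℂ (Set.range D)).topologicalClosure = ⊤) :
    {b : B | W b = 0} =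
      ⋂₀ {J : Set B | IsClosed J ∧
        {x : B | ∃ a₁ a₂ : A, x = D a₁ * D a₂ - D (a₁ * a₂)} ⊆ J ∧
        (0 : B) ∈ J ∧
        (∀ x ∈ J, ∀ y ∈ J, x + y ∈ J) ∧
        (∀ (c : ℂ), ∀ x ∈ J, c • x ∈ J) ∧
        (∀ (b : B), ∀ x ∈ J, b * x ∈ J ∧ x * b ∈ J)} := by

  letI iA : NonUnitalCStarAlgebra A := {}
  letI iB : NonUnitalCStarAlgebra B := {}
  have Wc : Continuous W := AddMonoidHomClass.continuous_of_bound W 1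
    (fun x => by simpa only [one_mul] using NonUnitalStarAlgHom.norm_apply_le W x)
  apply Set.Subset.antisymm
  · rintro b hb J ⟨hJ, hq, h0, hadd, hsm, hm⟩
    let J' : Submodule ℂ B :=
      { carrier := J
        zero_mem' := h0
        add_mem' := fun {x y} hx hy => hadd x hx y hy
        smul_mem' := fun c x hx => hsm c x hx }
    have := aux_main J' hJ hm D hD W hWD hgen (fun a b => hq ⟨a, b, rfl⟩) b
    have hb' : W b = 0 := hb
    rw [hb', map_zero, sub_zero] at this
    exact this
  · refine Set.sInter_subset_of_mem ⟨isClosed_eq Wc continuous_const, ?_, ?_, ?_, ?_, ?_⟩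
    · rintro _ ⟨a, b, rfl⟩
      simp [hWD]
    · simp
    · intro x hx y hy
      simp only [Set.mem_ofPred_eq] at *
      simp [hx, hy]
    · intro c x hx
      simp only [Set.mem_ofPred_eq] at *
      simp [hx]
    · intro b x hx
      simp only [Set.mem_ofPred_eq] at *
      simp [hx]
end

section
/- Let A be a unital C*-algebra, I a closed two-sided ideal of A, B a unital C*-algebra, and π : A → B a unital *-homomorphism whose restriction to I is injective. Then for every a ∈ A the following are equivalent: (i) a is invertible in A; (ii) π(a) is invertible in B and a is invertible modulo I, i.e. there exists b ∈ A with ab − 1 ∈ I and ba − 1 ∈ I. -/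
theorem exists_preimage_inv {A B : Type*} [CStarAlgebra A] [CStarAlgebra B]
    (π : A →⋆ₐ[ℂ] B) (a : A) (h : IsUnit (π a)) : ∃ u : A, π u * π a = 1 ∧ π a * π u = 1 := by
  have hc : IsSelfAdjoint (star a * a) := IsSelfAdjoint.star_mul_self a
  have hpc : IsSelfAdjoint (π (star a * a)) := hc.map π
  have hu : IsUnit (π (star a * a)) := by
    rw [map_mul, map_star]; exact h.star.mul h
  have h0 : (0 : ℝ) ∈ (spectrum ℝ (π (star a * a)))ᶜ := by
    simpa using (spectrum.zero_notMem_iff ℝ).2 hu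
  have hop : IsOpen (spectrum ℝ (π (star a * a)))ᶜ := (spectrum.isClosed _).isOpen_compl
  obtain ⟨δ, hδ, hb⟩ := Metric.isOpen_iff.1 hop 0 h0
  let g : ℝ → ℝ := fun x => x / max (x ^ 2) (δ ^ 2)
  have hpos : ∀ x : ℝ, 0 < max (x ^ 2) (δ ^ 2) := fun x => lt_max_of_lt_right (by positivity)
  have hg : Continuous g := by
    refine Continuous.div continuous_id (by fun_prop) (fun x => (hpos x).ne')
  have hcont : Continuous π :=
    AddMonoidHomClass.continuous_of_bound π 1 fun x => by
      simpa using NonUnitalStarAlgHom.norm_apply_le π x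
  have hmap : π (cfc g (star a * a)) = cfc g (π (star a * a)) :=
    StarAlgHomClass.map_cfc π g (star a * a) hg.continuousOn hcont hc hpc
  have key : cfc g (π (star a * a)) * π (star a * a) = 1 := by
    conv_lhs => rw [← cfc_id' ℝ (π (star a * a)) hpc]
    rw [cfc_id' ℝ (π (star a * a)) hpc]
    nth_rewrite 2 [← cfc_id' ℝ (π (star a * a)) hpc]
    rw [← cfc_mul g (fun x => x) _ hg.continuousOn continuousOn_id, ← cfc_one ℝ _ hpc]
    refine cfc_congr fun x hx => ?_
    have hx' : δ ≤ |x| := by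
      by_contra hlt
      exact hb (by simpa using hlt) hx
    have h2 : δ ^ 2 ≤ x ^ 2 := by
      rw [← sq_abs x]; gcongr
    have hx0 : x ≠ 0 := by
      rintro rfl; simp at hx'; linarith
    simp only [g, max_eq_left h2, Pi.one_apply]
    field_simp
  have hl : π (cfc g (star a * a) * star a) * π a = 1 := by
    rw [← map_mul, mul_assoc, map_mul, hmap, key]
  refine ⟨_, hl, ?_⟩
  obtain ⟨v, hv⟩ := h
  have hl' : π (cfc g (star a * a) * star a) = (↑v⁻¹ : B) := by
    rw [← hv] at hl
    exact Units.eq_inv_of_mul_eq_one_right hl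
  rw [hl', ← hv, Units.mul_inv]

/-- Let `A`, `B` be unital C*-algebras, `I` a closed two-sided ideal of `A`,
and `π : A → B` a unital *-homomorphism injective on `I`. Then `a ∈ A` is invertible iff
`π a` is invertible and `a` is invertible modulo `I`. -/
theorem stmt2 {A B : Type*}
    [NormedRing A] [StarRing A] [CStarRing A] [CompleteSpace A]
    [NormedAlgebra ℂ A] [StarModule ℂ A]
    [NormedRing B] [StarRing B] [CStarRing B] [CompleteSpace B]
    [NormedAlgebra ℂ B] [StarModule ℂ B]
    (I : TwoSidedIdeal A) (hI : IsClosed (I : Set A))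
    (π : A →⋆ₐ[ℂ] B) (hπ : Set.InjOn π (I : Set A)) (a : A) :
    IsUnit a ↔ (IsUnit (π a) ∧ ∃ b : A, a * b - 1 ∈ I ∧ b * a - 1 ∈ I) := by
  letI : CStarAlgebra A := {}
  letI : CStarAlgebra B := {}
  constructor
  · intro h
    refine ⟨h.map π, ?_⟩
    obtain ⟨v, rfl⟩ := h
    exact ⟨(↑v⁻¹ : A), by simp [I.zero_mem], by simp [I.zero_mem]⟩
  · rintro ⟨h, b, h1, h2⟩
    obtain ⟨u, hu1, hu2⟩ := exists_preimage_inv π a h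
    have z : ∀ x ∈ I, π x = 0 → x = 0 := fun x hx h0 =>
      hπ hx I.zero_mem (by rw [h0, map_zero])
    have e1 : (a * b - 1) * (a * u - 1) = 0 :=
      z _ (I.mul_mem_right _ _ h1) (by simp [hu2])
    have e2 : (u * a - 1) * (b * a - 1) = 0 :=
      z _ (I.mul_mem_left _ _ h2) (by simp [hu1])
    refine isUnit_iff_exists_and_exists.2 ⟨⟨u - b * (a * u - 1), ?_⟩, ⟨u - (u * a - 1) * b, ?_⟩⟩
    · have : a * (u - b * (a * u - 1)) = 1 - (a * b - 1) * (a * u - 1) := by noncomm_ring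
      rw [this, e1, sub_zero]
    · have : (u - (u * a - 1) * b) * a = 1 - (u * a - 1) * (b * a - 1) := by noncomm_ring
      rw [this, e2, sub_zero]
end

section
/- The smallest closed *-subalgebra of F containing all sequences (P_n A P_n)_{n≥1} with A ∈ O_N coincides with the smallest closed *-subalgebra of F containing the N sequences (P_n S_j P_n)_{n≥1}, j ∈ Ω. -/
theorem basis_ext {H : Type*} [NormedAddCommGroup H] [InnerProductSpace ℂ H] [CompleteSpace H]
    (e : HilbertBasis ℕ ℂ H) {A B : H →L[ℂ] H} (h : ∀ k, A (e k) = B (e k)) : A = B := by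
  apply ContinuousLinearMap.ext_on (s := Set.range e)
  · rw [dense_iff_closure_eq]
    have := e.dense_span
    rw [← Submodule.topologicalClosure_coe, this]
    rfl
  · rintro _ ⟨k, rfl⟩
    exact h k

theorem basis_inner {H : Type*} [NormedAddCommGroup H] [InnerProductSpace ℂ H] [CompleteSpace H]
    (e : HilbertBasis ℕ ℂ H) (i j : ℕ) : inner ℂ (e i) (e j) = if i = j then (1 : ℂ) else 0 :=
  (orthonormal_iff_ite.mp e.orthonormal) i j

theorem basis_ext_inner {H : Type*} [NormedAddCommGroup H] [InnerProductSpace ℂ H]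
    [CompleteSpace H] (e : HilbertBasis ℕ ℂ H) {x y : H}
    (h : ∀ k, inner ℂ (e k) x = inner ℂ (e k) y) : x = y := by
  apply e.repr.injective
  ext k
  rw [e.repr_apply_apply, e.repr_apply_apply, h]

theorem P_star {H : Type*} [NormedAddCommGroup H] [InnerProductSpace ℂ H] [CompleteSpace H]
    (e : HilbertBasis ℕ ℂ H) (P : ℕ → H →L[ℂ] H)
    (hP : ∀ n k : ℕ, P n (e k) = if k < n then e k else 0) (n : ℕ) : star (P n) = P n := by
  apply basis_ext e
  intro k
  apply basis_ext_inner e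
  intro l
  rw [ContinuousLinearMap.star_eq_adjoint, ContinuousLinearMap.adjoint_inner_right, hP, hP]
  by_cases h : l = k
  · subst h; split_ifs <;> simp
  · split_ifs <;> simp [basis_inner, h]

theorem P_idem {H : Type*} [NormedAddCommGroup H] [InnerProductSpace ℂ H] [CompleteSpace H]
    (e : HilbertBasis ℕ ℂ H) (P : ℕ → H →L[ℂ] H)
    (hP : ∀ n k : ℕ, P n (e k) = if k < n then e k else 0) (n : ℕ) : P n * P n = P n := by
  apply basis_ext e
  intro k
  rw [mul_apply_eq_comp, hP]
  split_ifs with h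
  · rw [hP, if_pos h]
  · simp

theorem P_norm {H : Type*} [NormedAddCommGroup H] [InnerProductSpace ℂ H] [CompleteSpace H]
    (e : HilbertBasis ℕ ℂ H) (P : ℕ → H →L[ℂ] H)
    (hP : ∀ n k : ℕ, P n (e k) = if k < n then e k else 0) (n : ℕ) : ‖P n‖ ≤ 1 := by
  have h : ‖star (P n) * P n‖ = ‖P n‖ * ‖P n‖ := CStarRing.norm_star_mul_self
  rw [P_star e P hP, P_idem e P hP] at h
  nlinarith [norm_nonneg (P n)]

theorem P_S {H : Type*} [NormedAddCommGroup H] [InnerProductSpace ℂ H] [CompleteSpace H]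
    (e : HilbertBasis ℕ ℂ H) (N : ℕ) (hN : 2 ≤ N)
    (S : Fin N → H →L[ℂ] H)
    (hS : ∀ (i : Fin N) (r : ℕ), S i (e r) = e (r * N + (i : ℕ)))
    (P : ℕ → H →L[ℂ] H)
    (hP : ∀ n k : ℕ, P n (e k) = if k < n then e k else 0) (n : ℕ) (i : Fin N) :
    P n * S i * P n = P n * S i := by
  apply basis_ext e
  intro k
  simp only [mul_apply_eq_comp, hP]
  split_ifs with h
  · rfl
  · rw [hS, hP, if_neg (by nlinarith)]
    simp

theorem S_orth {H : Type*} [NormedAddCommGroup H] [InnerProductSpace ℂ H] [CompleteSpace H]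
    (e : HilbertBasis ℕ ℂ H) (N : ℕ)
    (S : Fin N → H →L[ℂ] H)
    (hS : ∀ (i : Fin N) (r : ℕ), S i (e r) = e (r * N + (i : ℕ))) (i j : Fin N) :
    star (S i) * S j = if i = j then 1 else 0 := by
  apply basis_ext e
  intro k
  apply basis_ext_inner e
  intro l
  rw [mul_apply_eq_comp, ContinuousLinearMap.star_eq_adjoint,
    ContinuousLinearMap.adjoint_inner_right, hS, hS, basis_inner]
  have key : l * N + (i : ℕ) = k * N + (j : ℕ) ↔ l = k ∧ i = j := by
    constructor
    · intro h
      have h1 := congrArg (· % N) h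
      have h2 := congrArg (· / N) h
      have hN : 0 < N := i.pos
      simp [Nat.mod_eq_of_lt, Nat.add_div_of_dvd_right, hN, Nat.div_eq_of_lt] at h1 h2
      exact ⟨h2, Fin.ext h1⟩
    · rintro ⟨rfl, rfl⟩; rfl
  by_cases h : i = j <;> rw [if_congr key rfl rfl] <;>
    simp [h, basis_inner]

theorem S_sum {H : Type*} [NormedAddCommGroup H] [InnerProductSpace ℂ H] [CompleteSpace H]
    (e : HilbertBasis ℕ ℂ H) (N : ℕ) (hN : 2 ≤ N)
    (S : Fin N → H →L[ℂ] H)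
    (hS : ∀ (i : Fin N) (r : ℕ), S i (e r) = e (r * N + (i : ℕ))) :
    ∑ i, S i * star (S i) = 1 := by
  apply basis_ext e
  intro k
  have hk : e k = S ⟨k % N, Nat.mod_lt _ (by omega)⟩ (e (k / N)) := by
    rw [hS]; congr 1; exact (Nat.div_add_mod' k N).symm
  rw [hk]
  generalize (⟨k % N, Nat.mod_lt _ (by omega)⟩ : Fin N) = j
  have : (∑ i, S i * star (S i)) * S j = S j := by
    simp [Finset.sum_mul, mul_assoc, S_orth e N S hS]
  exact congrArg (fun T : H →L[ℂ] H => T (e (k / N))) this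

noncomputable def Phi {H : Type*} [NormedAddCommGroup H] [InnerProductSpace ℂ H]
    [CompleteSpace H] (P : ℕ → H →L[ℂ] H) (hP : ∀ n, ‖P n‖ ≤ 1) :
    (H →L[ℂ] H) →L[ℂ] BoundedContinuousFunction ℕ (H →L[ℂ] H) :=
  have bd : ∀ (A : H →L[ℂ] H) (n : ℕ), ‖P n * A * P n‖ ≤ ‖A‖ := fun A n => by
    calc ‖P n * A * P n‖ ≤ ‖P n‖ * ‖A‖ * ‖P n‖ :=
          (norm_mul_le _ _).trans (by gcongr; exact norm_mul_le _ _)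
      _ ≤ 1 * ‖A‖ * 1 := by gcongr <;> exact hP n
      _ = ‖A‖ := by ring
  LinearMap.mkContinuous
    { toFun := fun A => BoundedContinuousFunction.ofNormedAddCommGroup
        (fun n => P n * A * P n) continuous_of_discreteTopology ‖A‖ (bd A)
      map_add' := fun A B => by
        ext1 n
        simp [mul_add, add_mul]
      map_smul' := fun c A => by
        ext1 n
        simp } 1 (fun A => by
      rw [one_mul]
      exact (BoundedContinuousFunction.norm_le (norm_nonneg _)).2 (bd A))

theorem Phi_apply {H : Type*} [NormedAddCommGroup H] [InnerProductSpace ℂ H]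
    [CompleteSpace H] (P : ℕ → H →L[ℂ] H) (hP : ∀ n, ‖P n‖ ≤ 1) (A : H →L[ℂ] H) (n : ℕ) :
    Phi P hP A n = P n * A * P n := rfl


/-- Model of the situation: `H` is a Hilbert space with orthonormal basis
`(e k)_{k ∈ ℕ}` (so `H ≅ ℓ²(ℤ⁺)`); `P n` is the orthogonal projection onto the span of
`e 0, …, e (n-1)`; `S i` (for `i ∈ Ω = Fin N`) is the isometry with `S i (e r) = e (r*N+i)`.
The algebra `F` of bounded matrix sequences is modelled by bounded sequences of operators on
`H` (the sequence `(PₙAPₙ)` has `n`-th entry `Pₙ A Pₙ`, an operator supported on the range of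
`Pₙ`, i.e. an `n×n` matrix). The claim: the smallest closed *-subalgebra of `F` containing
all sequences `(Pₙ A Pₙ)` with `A` in the concrete Cuntz algebra `O_N` equals the smallest
closed *-subalgebra of `F` containing the sequences `(Pₙ S_j Pₙ)`, `j ∈ Ω`. -/
theorem stmt3 {H : Type*} [NormedAddCommGroup H] [InnerProductSpace ℂ H] [CompleteSpace H]
    (e : HilbertBasis ℕ ℂ H) (N : ℕ) (hN : 2 ≤ N)
    (S : Fin N → H →L[ℂ] H)
    (hS : ∀ (i : Fin N) (r : ℕ), S i (e r) = e (r * N + (i : ℕ)))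
    (P : ℕ → H →L[ℂ] H)
    (hP : ∀ n k : ℕ, P n (e k) = if k < n then e k else 0) :
    (NonUnitalStarAlgebra.adjoin ℂ
        {f : BoundedContinuousFunction ℕ (H →L[ℂ] H) |
          ∃ A ∈ (NonUnitalStarAlgebra.adjoin ℂ (Set.range S)).topologicalClosure,
            ∀ n : ℕ, f n = P n * A * P n}).topologicalClosure
    = (NonUnitalStarAlgebra.adjoin ℂ
        {f : BoundedContinuousFunction ℕ (H →L[ℂ] H) |
          ∃ j : Fin N, ∀ n : ℕ, f n = P n * S j * P n}).topologicalClosure := by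
  have hstar := P_star e P hP
  have hidem := P_idem e P hP
  have hnorm := P_norm e P hP
  have hPS := P_S e N hN S hS P hP
  have horth := S_orth e N S hS
  have hsum := S_sum e N hN S hS
  apply le_antisymm
  swap
  · apply NonUnitalStarSubalgebra.topologicalClosure_mono
    apply NonUnitalStarAlgebra.adjoin_mono
    rintro f ⟨j, hf⟩
    exact ⟨S j, NonUnitalStarSubalgebra.le_topologicalClosure _
      (NonUnitalStarAlgebra.subset_adjoin ℂ _ ⟨j, rfl⟩), hf⟩
  set G := NonUnitalStarAlgebra.adjoin ℂ
        {f : BoundedContinuousFunction ℕ (H →L[ℂ] H) |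
          ∃ j : Fin N, ∀ n : ℕ, f n = P n * S j * P n} with hG
  have hgen : ∀ j, Phi P hnorm (S j) ∈ G := fun j =>
    NonUnitalStarAlgebra.subset_adjoin ℂ _ ⟨j, fun n => rfl⟩
  -- words
  let M : Submonoid (H →L[ℂ] H) := Submonoid.closure (Set.range S)
  have hPM : ∀ A ∈ M, ∀ n, P n * A * P n = P n * A := by
    intro A hA
    induction hA using Submonoid.closure_induction with
    | mem x hx => obtain ⟨j, rfl⟩ := hx; exact fun n => hPS n j
    | one => intro n; simp [hidem]
    | mul x y _ _ hx hy =>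
      intro n
      rw [← mul_assoc, ← hx n, mul_assoc _ (P n) y, mul_assoc, hy n]
  have hmulstar : ∀ A ∈ M, ∀ B ∈ M,
      Phi P hnorm (A * star B) = Phi P hnorm A * star (Phi P hnorm B) := by
    intro A hA B hB
    ext1 n
    rw [BoundedContinuousFunction.mul_apply, BoundedContinuousFunction.star_apply]
    simp only [Phi_apply]
    rw [hPM A hA, hPM B hB, star_mul, hstar]
    simp only [mul_assoc]
  have hone : Phi P hnorm 1 ∈ G := by
    rw [← hsum, map_sum]
    refine sum_mem fun i _ => ?_
    have hi : S i ∈ M := Submonoid.subset_closure ⟨i, rfl⟩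
    rw [hmulstar _ hi _ hi]
    exact mul_mem (hgen i) (star_mem (hgen i))
  have hMG : ∀ A ∈ M, Phi P hnorm A ∈ G := by
    intro A hA
    induction hA using Submonoid.closure_induction with
    | mem x hx => obtain ⟨j, rfl⟩ := hx; exact hgen j
    | one => exact hone
    | mul x y hxM hyM hx hy =>
      have : Phi P hnorm (x * y) = Phi P hnorm x * Phi P hnorm y := by
        ext1 n
        rw [BoundedContinuousFunction.mul_apply]
        simp only [Phi_apply]
        rw [hPM _ (mul_mem hxM hyM), hPM x hxM, hPM y hyM, ← mul_assoc (P n * x) (P n) y,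
          hPM x hxM, mul_assoc]
      rw [this]
      exact mul_mem hx hy
  let V : Submodule ℂ (H →L[ℂ] H) :=
    Submodule.span ℂ {X | ∃ A ∈ M, ∃ B ∈ M, X = A * star B}
  have hVG : ∀ X ∈ V, Phi P hnorm X ∈ G := by
    intro X hX
    induction hX using Submodule.span_induction with
    | mem x hx =>
      obtain ⟨A, hA, B, hB, rfl⟩ := hx
      rw [hmulstar A hA B hB]
      exact mul_mem (hMG A hA) (star_mem (hMG B hB))
    | zero => rw [map_zero]; exact zero_mem _
    | add x y _ _ hx hy => rw [map_add]; exact add_mem hx hy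
    | smul c x _ hx => rw [map_smul]; exact SMulMemClass.smul_mem c hx
  have hspan : ∀ Y : H →L[ℂ] H, (∀ A ∈ M, ∀ B ∈ M, Y * (A * star B) ∈ V) →
      ∀ v ∈ V, Y * v ∈ V := by
    intro Y hY v hv
    induction hv using Submodule.span_induction with
    | mem x hx =>
      obtain ⟨A, hA, B, hB, rfl⟩ := hx
      exact hY A hA B hB
    | zero => rw [mul_zero]; exact zero_mem _
    | add x y _ _ hx hy => rw [mul_add]; exact add_mem hx hy
    | smul c x _ hx => rw [mul_smul_comm]; exact V.smul_mem c hx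
  have hSM : ∀ i, S i ∈ M := fun i => Submonoid.subset_closure ⟨i, rfl⟩
  have hSV : ∀ i, ∀ v ∈ V, S i * v ∈ V := fun i => hspan _ fun A hA B hB =>
    Submodule.subset_span ⟨S i * A, mul_mem (hSM i) hA, B, hB, by rw [mul_assoc]⟩
  have hSsV : ∀ i, ∀ v ∈ V, star (S i) * v ∈ V := by
    intro i
    refine hspan _ fun A hA B hB => ?_
    induction hA using Submonoid.closure_induction_left with
    | one =>
      exact Submodule.subset_span ⟨1, one_mem _, B * S i, mul_mem hB (hSM i), by
        rw [star_mul, one_mul, one_mul]⟩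
    | mul_left x hx y hy _ =>
      obtain ⟨j, rfl⟩ := hx
      have : star (S i) * (S j * y * star B) = (star (S i) * S j) * (y * star B) := by
        simp only [mul_assoc]
      rw [this, horth]
      split_ifs
      · rw [one_mul]
        exact Submodule.subset_span ⟨y, hy, B, hB, rfl⟩
      · rw [zero_mul]; exact zero_mem _
  have hadj : ∀ X ∈ NonUnitalStarAlgebra.adjoin ℂ (Set.range S),
      (∀ v ∈ V, X * v ∈ V) ∧ (∀ v ∈ V, star X * v ∈ V) := by
    intro X hX
    induction hX using NonUnitalStarAlgebra.adjoin_induction with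
    | mem x hx => obtain ⟨j, rfl⟩ := hx; exact ⟨hSV j, hSsV j⟩
    | add x y _ _ hx hy =>
      refine ⟨fun v hv => ?_, fun v hv => ?_⟩
      · rw [add_mul]; exact add_mem (hx.1 v hv) (hy.1 v hv)
      · rw [star_add, add_mul]; exact add_mem (hx.2 v hv) (hy.2 v hv)
    | zero => simp
    | mul x y _ _ hx hy =>
      refine ⟨fun v hv => ?_, fun v hv => ?_⟩
      · rw [mul_assoc]; exact hx.1 _ (hy.1 v hv)
      · rw [star_mul, mul_assoc]; exact hy.2 _ (hx.2 v hv)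
    | smul c x _ hx =>
      refine ⟨fun v hv => ?_, fun v hv => ?_⟩
      · rw [smul_mul_assoc]; exact V.smul_mem _ (hx.1 v hv)
      · rw [star_smul, smul_mul_assoc]; exact V.smul_mem _ (hx.2 v hv)
    | star x _ hx => exact ⟨hx.2, by rw [star_star]; exact hx.1⟩
  have h1V : (1 : H →L[ℂ] H) ∈ V :=
    Submodule.subset_span ⟨1, one_mem _, 1, one_mem _, by simp⟩
  apply NonUnitalStarSubalgebra.topologicalClosure_minimal
  swap
  · exact NonUnitalStarSubalgebra.isClosed_topologicalClosure _
  apply NonUnitalStarAlgebra.adjoin_le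
  rintro f ⟨A, hA, hf⟩
  have hfA : f = Phi P hnorm A := by
    ext1 n
    rw [hf n, Phi_apply]
  rw [hfA]
  have hA' : A ∈ closure (NonUnitalStarAlgebra.adjoin ℂ (Set.range S) : Set (H →L[ℂ] H)) := hA
  have := map_mem_closure (Phi P hnorm).continuous hA' (t := (G : Set _)) (fun X hX => by
    have := (hadj X hX).1 1 h1V
    rw [mul_one] at this
    exact hVG X this)
  exact this
end

section
/- For every n ≥ 1 and all i, j ∈ Ω with i ≠ j the following hold: (i) (P_nS_iP_n)(P_nS_i^*P_n)(P_nS_iP_n) = P_nS_iP_n, i.e. P_nS_iP_n is a partial isometry, and its range projection is P_nS_iS_i^*P_n; (ii) (P_nS_iS_i^*P_n)(P_nS_jS_j^*P_n) = 0; (iii) P_nS_i^*P_nS_jP_n = 0; (iv) Σ_{i∈Ω} P_nS_iP_nS_i^*P_n = P_n. -/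
theorem aux_vec {H : Type*} [NormedAddCommGroup H] [InnerProductSpace ℂ H]
    (e : HilbertBasis ℕ ℂ H) {x y : H} (h : ∀ k, inner ℂ (e k) x = inner ℂ (e k) y) : x = y := by
  apply e.repr.injective
  ext k
  simpa [HilbertBasis.repr_apply_apply] using h k

theorem aux_op {H : Type*} [NormedAddCommGroup H] [InnerProductSpace ℂ H]
    (e : HilbertBasis ℕ ℂ H) {A B : H →L[ℂ] H} (h : ∀ k, A (e k) = B (e k)) : A = B := by
  apply ContinuousLinearMap.ext_on (s := Set.range e)
  · have := e.dense_span
    rw [Submodule.dense_iff_topologicalClosure_eq_top]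
    exact this
  · rintro _ ⟨k, rfl⟩
    exact h k

theorem aux_inner {H : Type*} [NormedAddCommGroup H] [InnerProductSpace ℂ H]
    (e : HilbertBasis ℕ ℂ H) (a b : ℕ) : inner ℂ (e a) (e b) = if a = b then (1 : ℂ) else 0 :=
  orthonormal_iff_ite.mp e.orthonormal a b

/-- With `H`, basis `e`, projections `P n` and Cuntz isometries `S i` as in
the context: for `n ≥ 1` and `i ≠ j` in `Ω`, (i) `Pₙ Sᵢ Pₙ` is a partial isometry with range
projection `Pₙ Sᵢ Sᵢ* Pₙ`; (ii) the range projections for `i ≠ j` are orthogonal;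
(iii) `Pₙ Sᵢ* Pₙ Sⱼ Pₙ = 0`; (iv) `Σᵢ Pₙ Sᵢ Pₙ Sᵢ* Pₙ = Pₙ`. -/
theorem stmt4 {H : Type*} [NormedAddCommGroup H] [InnerProductSpace ℂ H] [CompleteSpace H]
    (e : HilbertBasis ℕ ℂ H) (N : ℕ) (hN : 2 ≤ N)
    (S : Fin N → H →L[ℂ] H)
    (hS : ∀ (i : Fin N) (r : ℕ), S i (e r) = e (r * N + (i : ℕ)))
    (P : ℕ → H →L[ℂ] H)
    (hP : ∀ n k : ℕ, P n (e k) = if k < n then e k else 0)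
    (n : ℕ) (hn : 1 ≤ n) (i j : Fin N) (hij : i ≠ j) :
    ((P n * S i * P n) * star (P n * S i * P n) * (P n * S i * P n) = P n * S i * P n) ∧
    ((P n * S i * P n) * star (P n * S i * P n) = P n * (S i * star (S i)) * P n) ∧
    ((P n * (S i * star (S i)) * P n) * (P n * (S j * star (S j)) * P n) = 0) ∧
    (P n * star (S i) * P n * S j * P n = 0) ∧
    (∑ k : Fin N, P n * S k * P n * star (S k) * P n = P n) := by
  have hNpos : 0 < N := by omega
  have hPs : star (P n) = P n := by
    apply aux_op e
    intro k
    apply aux_vec e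
    intro l
    rw [ContinuousLinearMap.star_eq_adjoint, ContinuousLinearMap.adjoint_inner_right, hP, hP]
    by_cases h1 : l < n <;> by_cases h2 : k < n <;> simp [h1, h2, aux_inner] <;> omega
  have hSs : ∀ (i : Fin N) (k : ℕ),
      star (S i) (e k) = if k % N = (i : ℕ) then e (k / N) else 0 := by
    intro i k
    apply aux_vec e
    intro l
    rw [ContinuousLinearMap.star_eq_adjoint, ContinuousLinearMap.adjoint_inner_right, hS]
    have hi := i.2
    have key : l * N + (i : ℕ) = k ↔ k % N = (i : ℕ) ∧ l = k / N := by
      constructor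
      · rintro rfl
        constructor
        · rw [Nat.mul_add_mod_of_lt hi]
        · rw [mul_comm, Nat.mul_add_div hNpos, Nat.div_eq_of_lt hi, add_zero]
      · rintro ⟨h1, rfl⟩
        rw [← h1, mul_comm]
        exact Nat.div_add_mod k N
    by_cases h1 : k % N = (i : ℕ) <;> simp [aux_inner, key, h1]
  have hdm : ∀ k, k / N * N + k % N = k := fun k => by
    rw [mul_comm]; exact Nat.div_add_mod k N
  have hle : ∀ k, k / N ≤ k := fun k => Nat.div_le_self k N
  have h2 : ∀ i : Fin N,
      (P n * S i * P n) * star (P n * S i * P n) = P n * (S i * star (S i)) * P n := by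
    intro i
    apply aux_op e
    intro k
    simp only [star_mul, hPs, ContinuousLinearMap.mul_apply, hP]
    have := hle k
    by_cases hk : k < n
    · have : k / N < n := by omega
      by_cases hi : k % N = (i : ℕ) <;> simp [hk, hi, hSs, hP, this]
    · simp [hk]
  have hmod : ∀ (i : Fin N) (r : ℕ), (r * N + (i : ℕ)) % N = i := fun i r =>
    Nat.mul_add_mod_of_lt i.2
  have hdiv : ∀ (i : Fin N) (r : ℕ), (r * N + (i : ℕ)) / N = r := fun i r => by
    rw [mul_comm, Nat.mul_add_div hNpos, Nat.div_eq_of_lt i.2, add_zero]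
  have hji : (j : ℕ) ≠ (i : ℕ) := fun h => hij (Fin.ext h.symm)
  refine ⟨?_, h2 i, ?_, ?_, ?_⟩
  · rw [h2 i]
    apply aux_op e
    intro k
    simp only [ContinuousLinearMap.mul_apply, hP]
    by_cases hk : k < n
    · by_cases h : k * N + (i : ℕ) < n <;> simp [hk, h, hS, hP, hSs, hmod, hdiv]
    · simp [hk]
  · apply aux_op e
    intro k
    simp only [ContinuousLinearMap.mul_apply, hP]
    by_cases hk : k < n
    · by_cases h : k % N = (j : ℕ)
      · have h' : k / N * N + (j : ℕ) = k := by rw [← h]; exact hdm k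
        have h3 : k % N ≠ (i : ℕ) := by rw [h]; exact hji
        simp [hk, hSs, h, hS, h', hP, hji]
      · simp [hk, hSs, h]
    · simp [hk]
  · apply aux_op e
    intro k
    simp only [ContinuousLinearMap.mul_apply, hP]
    by_cases hk : k < n
    · by_cases h : k * N + (j : ℕ) < n <;> simp [hk, h, hS, hP, hSs, hmod, hji]
    · simp [hk]
  · apply aux_op e
    intro k
    simp only [ContinuousLinearMap.sum_apply, ContinuousLinearMap.mul_apply, hP]
    by_cases hk : k < n
    · have hlt : k / N < n := lt_of_le_of_lt (hle k) hk
      rw [Finset.sum_eq_single (⟨k % N, Nat.mod_lt k hNpos⟩ : Fin N)]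
      · simp [hk, hSs, hP, hlt, hS, hdm]
      · intro b _ hb
        have : k % N ≠ (b : ℕ) := fun h => hb (Fin.ext h.symm)
        simp [hk, hSs, this]
      · simp
    · simp [hk]
end

section
/- For every k ≥ 1, every multi-index i = (i_1,…,i_k) ∈ Ω^k and every n ≥ 1, the operator V := P_nS_{i_1}P_nS_{i_2}P_n⋯P_nS_{i_k}P_n is a partial isometry, i.e. VV^*V = V. -/
def GoodOp {H : Type*} [NormedAddCommGroup H] [InnerProductSpace ℂ H]
    (e : HilbertBasis ℕ ℂ H) (V : H →L[ℂ] H) : Prop :=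
  ∃ f : ℕ → Option ℕ, (∀ r, V (e r) = (f r).elim 0 e) ∧
    ∀ a b c, f a = some c → f b = some c → a = b

theorem GoodOp.one {H : Type*} [NormedAddCommGroup H] [InnerProductSpace ℂ H]
    (e : HilbertBasis ℕ ℂ H) : GoodOp e 1 :=
  ⟨some, fun r => by simp, fun a b c h1 h2 => by simp_all⟩

theorem GoodOp.mul {H : Type*} [NormedAddCommGroup H] [InnerProductSpace ℂ H]
    {e : HilbertBasis ℕ ℂ H} {V W : H →L[ℂ] H} (hV : GoodOp e V) (hW : GoodOp e W) :
    GoodOp e (V * W) := by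
  obtain ⟨f, hf, fi⟩ := hV
  obtain ⟨g, hg, gi⟩ := hW
  refine ⟨fun r => (g r).bind f, fun r => ?_, fun a b c h1 h2 => ?_⟩
  · rw [mul_apply_eq_comp, hg]
    cases h : g r <;> simp [hf, h]
  · simp only [Option.bind_eq_some_iff] at h1 h2
    obtain ⟨x, hx, hx'⟩ := h1
    obtain ⟨y, hy, hy'⟩ := h2
    have := fi _ _ _ hx' hy'
    subst this
    exact gi _ _ _ hx hy

theorem GoodOp.pi {H : Type*} [NormedAddCommGroup H] [InnerProductSpace ℂ H] [CompleteSpace H]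
    {e : HilbertBasis ℕ ℂ H} {V : H →L[ℂ] H} (hV : GoodOp e V) :
    V * star V * V = V := by
  obtain ⟨f, hf, fi⟩ := hV
  have hd : Dense (Submodule.span ℂ (Set.range e) : Set H) := by
    rw [Submodule.dense_iff_topologicalClosure_eq_top]
    exact e.dense_span
  refine ContinuousLinearMap.ext_on hd ?_
  rintro _ ⟨r, rfl⟩
  simp only [mul_apply_eq_comp]
  cases h : f r with
  | none => simp [hf, h]
  | some m =>
    have : star V (e m) = e r := by
      apply e.repr.injective
      ext s
      rw [e.repr_apply_apply, e.repr_apply_apply, ContinuousLinearMap.star_eq_adjoint,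
        ContinuousLinearMap.adjoint_inner_right, hf]
      have ho := orthonormal_iff_ite.mp e.orthonormal
      rw [ho]
      cases h' : f s with
      | none =>
        have : s ≠ r := by rintro rfl; simp_all
        simp [this]
      | some t =>
        simp only [Option.elim_some, ho]
        have : t = m ↔ s = r := by
          constructor
          · rintro rfl; exact fi _ _ _ h' h
          · rintro rfl; simp_all
        simp [this]
    have h2 : V (e r) = e m := by rw [hf, h]; rfl
    rw [h2, this, h2]

/-- For every `k ≥ 1`, every multi-index `i ∈ Ω^k` and every `n ≥ 1`, the
operator `V := Pₙ S_{i₁} Pₙ S_{i₂} Pₙ ⋯ Pₙ S_{i_k} Pₙ` is a partial isometry: `V V* V = V`. -/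
theorem stmt5 {H : Type*} [NormedAddCommGroup H] [InnerProductSpace ℂ H] [CompleteSpace H]
    (e : HilbertBasis ℕ ℂ H) (N : ℕ) (hN : 2 ≤ N)
    (S : Fin N → H →L[ℂ] H)
    (hS : ∀ (i : Fin N) (r : ℕ), S i (e r) = e (r * N + (i : ℕ)))
    (P : ℕ → H →L[ℂ] H)
    (hP : ∀ n k : ℕ, P n (e k) = if k < n then e k else 0)
    (k : ℕ) (hk : 1 ≤ k) (i : Fin k → Fin N) (n : ℕ) (hn : 1 ≤ n) :
    (P n * (List.ofFn fun t => S (i t) * P n).prod) *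
      star (P n * (List.ofFn fun t => S (i t) * P n).prod) *
      (P n * (List.ofFn fun t => S (i t) * P n).prod)
    = P n * (List.ofFn fun t => S (i t) * P n).prod := by
  have gP : GoodOp e (P n) := by
    refine ⟨fun r => if r < n then some r else none, fun r => ?_, fun a b c h1 h2 => ?_⟩
    · rw [hP]; by_cases h : r < n <;> simp [h]
    · simp at h1 h2; omega
  have gS : ∀ j, GoodOp e (S j) := fun j => by
    refine ⟨fun r => some (r * N + j), fun r => by simp [hS], fun a b c h1 h2 => ?_⟩
    simp only [Option.some.injEq] at h1 h2
    have : a * N = b * N := by omega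
    exact Nat.eq_of_mul_eq_mul_right (by omega) this
  have gL : ∀ L : List (H →L[ℂ] H), (∀ V ∈ L, GoodOp e V) → GoodOp e L.prod := by
    intro L
    induction L with
    | nil => intro _; simpa using GoodOp.one e
    | cons a L ih =>
      intro h
      rw [List.prod_cons]
      exact (h a (by simp)).mul (ih fun V hV => h V (by simp [hV]))
  refine (gP.mul (gL _ ?_)).pi
  intro V hV
  rw [List.mem_ofFn] at hV
  obtain ⟨t, rfl⟩ := hV
  exact (gS _).mul gP
end

section
/- For every k ≥ 1, every multi-index i = (i_1,…,i_k) ∈ Ω^k and every n ≥ 1, one has P_n S_i^* P_n S_i P_n = P_m, where m := ⌈(n − v_{i,k})/N^k⌉ (least integer ≥ (n − v_{i,k})/N^k) if n > v_{i,k}, and m := 0 otherwise. -/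
theorem aux_prod {H : Type*} [NormedAddCommGroup H] [InnerProductSpace ℂ H]
    (e : ℕ → H) (N : ℕ) (S : Fin N → H →L[ℂ] H)
    (hS : ∀ (i : Fin N) (r : ℕ), S i (e r) = e (r * N + (i : ℕ)))
    (k : ℕ) (i : Fin k → Fin N) (r : ℕ) :
    (List.ofFn fun t => S (i t)).prod (e r)
      = e (r * N ^ k + ∑ t : Fin k, (i t : ℕ) * N ^ (t : ℕ)) := by
  induction k with
  | zero => simp
  | succ k ih =>
    rw [List.ofFn_succ, List.prod_cons, mul_apply_eq_comp, ih (fun t => i t.succ), hS,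
      Fin.sum_univ_succ]
    congr 1
    have : ∑ t : Fin k, (i t.succ : ℕ) * N ^ ((t.succ : Fin (k+1)) : ℕ)
        = (∑ t : Fin k, (i t.succ : ℕ) * N ^ (t : ℕ)) * N := by
      rw [Finset.sum_mul]
      refine Finset.sum_congr rfl fun t _ => ?_
      rw [Fin.val_succ, pow_succ, mul_assoc]
    rw [this]
    simp only [Fin.val_zero, pow_zero]
    ring

theorem aux_star_s6 {H : Type*} [NormedAddCommGroup H] [InnerProductSpace ℂ H] [CompleteSpace H]
    (e : HilbertBasis ℕ ℂ H) (T : H →L[ℂ] H) (f : ℕ → ℕ) (hf : Function.Injective f)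
    (hT : ∀ r, T (e r) = e (f r)) (r : ℕ) : star T (e (f r)) = e r := by
  apply ((Submodule.dense_iff_topologicalClosure_eq_top).2 e.dense_span).eq_of_inner_left ℂ
  intro x hx
  induction hx using Submodule.span_induction with
  | mem x hx =>
    obtain ⟨s, rfl⟩ := hx
    rw [ContinuousLinearMap.star_eq_adjoint, ContinuousLinearMap.adjoint_inner_left, hT]
    have h := e.orthonormal
    rw [orthonormal_iff_ite] at h
    rw [h, h]
    simp [hf.eq_iff]
  | zero => simp
  | add x y _ _ hx hy => rw [inner_add_right, inner_add_right, hx, hy]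
  | smul a x _ hx => rw [inner_smul_right, inner_smul_right, hx]

/-- For `k ≥ 1`, a multi-index `i ∈ Ω^k` and `n ≥ 1`, one has
`Pₙ S_i* Pₙ S_i Pₙ = P_m` where `S_i = S_{i₁} ⋯ S_{i_k}`, `v = v_{i,k} = Σ_t i_{t+1} N^t`,
and `m = ⌈(n - v)/N^k⌉` if `n > v`, else `m = 0`. (For naturals `1 ≤ a`, `1 ≤ b`,
`⌈a/b⌉ = (a + b - 1)/b` with floor division.) -/
theorem stmt6 {H : Type*} [NormedAddCommGroup H] [InnerProductSpace ℂ H] [CompleteSpace H]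
    (e : HilbertBasis ℕ ℂ H) (N : ℕ) (hN : 2 ≤ N)
    (S : Fin N → H →L[ℂ] H)
    (hS : ∀ (i : Fin N) (r : ℕ), S i (e r) = e (r * N + (i : ℕ)))
    (P : ℕ → H →L[ℂ] H)
    (hP : ∀ n k : ℕ, P n (e k) = if k < n then e k else 0)
    (k : ℕ) (hk : 1 ≤ k) (i : Fin k → Fin N) (n : ℕ) (hn : 1 ≤ n) :
    P n * star ((List.ofFn fun t => S (i t)).prod) * P n *
        (List.ofFn fun t => S (i t)).prod * P n
      = P (if (∑ t : Fin k, (i t : ℕ) * N ^ (t : ℕ)) < n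
            then (n - (∑ t : Fin k, (i t : ℕ) * N ^ (t : ℕ)) + N ^ k - 1) / N ^ k
            else 0) := by
  set v := ∑ t : Fin k, (i t : ℕ) * N ^ (t : ℕ) with hv
  have hT := aux_prod (fun r => e r) N S hS k i
  set T := (List.ofFn fun t => S (i t)).prod with hTdef
  simp only [← hv] at hT
  have hM : 0 < N ^ k := by positivity
  have hst := aux_star_s6 e T (fun r => r * N ^ k + v)
    (fun a b h => Nat.eq_of_mul_eq_mul_right hM (Nat.add_right_cancel h)) hT
  have key : ∀ r, r < (if v < n then (n - v + N ^ k - 1) / N ^ k else 0) ↔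
      r * N ^ k + v < n := by
    intro r
    split_ifs with h
    · rw [← Nat.succ_le_iff, Nat.le_div_iff_mul_le hM, Nat.succ_mul]
      omega
    · constructor
      · intro h; omega
      · intro h'; omega
  refine ContinuousLinearMap.ext_on (s := Set.range e) ?_ ?_
  · exact (Submodule.dense_iff_topologicalClosure_eq_top).2 e.dense_span
  rintro _ ⟨r, rfl⟩
  simp only [mul_apply_eq_comp, hP n r]
  rw [hP]
  simp only [key]
  have hle : r ≤ r * N ^ k := Nat.le_mul_of_pos_right r hM
  by_cases h1 : r * N ^ k + v < n
  · have h2 : r < n := by omega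
    rw [if_pos h2, if_pos h1, hT, hP, if_pos h1, hst, hP, if_pos h2]
  · rw [if_neg h1]
    by_cases h2 : r < n
    · rw [if_pos h2, hT, hP, if_neg h1]; simp
    · rw [if_neg h2]; simp
end

section
/- Under axioms (A1) and (A2), for every k ≥ 1 the smallest closed two-sided ideal of A containing e − p_k coincides with the smallest closed two-sided ideal of A containing e − p_1. -/
/-- Under axioms (A1), (A2), for every `k ≥ 1` the smallest closed
two-sided ideal of `A` containing `1 - p k` (realized as the topological closure of the
two-sided ideal generated by `1 - p k`) coincides with the smallest closed two-sided ideal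
containing `1 - p 1`. -/
theorem stmt10 {A : Type*} [NormedRing A] [StarRing A] [CStarRing A] [CompleteSpace A]
    [NormedAlgebra ℂ A] [StarModule ℂ A]
    (N : ℕ) (hN : 2 ≤ N) (s : Fin N → A) (p : ℕ → A)
    (hp0 : p 0 = 1)
    (hproj : ∀ k : ℕ, IsSelfAdjoint (p k) ∧ p k * p k = p k)
    (hA1 : ∀ (k : ℕ), 1 ≤ k → ∀ i : Fin k → Fin N,
      star ((List.ofFn fun t => s (i t)).prod) * (List.ofFn fun t => s (i t)).prod = p k)
    (hA2 : ∑ i : Fin N, s i * star (s i) = 1)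
    (k : ℕ) (hk : 1 ≤ k) :
    closure ((TwoSidedIdeal.span {(1 : A) - p k} : TwoSidedIdeal A) : Set A)
      = closure ((TwoSidedIdeal.span {(1 : A) - p 1} : TwoSidedIdeal A) : Set A) := by
  have hp : ∃ a : A, ∀ n, p n = star (a ^ n) * a ^ n := by
    refine ⟨s ⟨0, by omega⟩, fun n => ?_⟩
    rcases Nat.eq_zero_or_pos n with rfl | hn
    · simp [hp0]
    · have h := hA1 n hn (fun _ => ⟨0, by omega⟩)
      simp only [List.ofFn_const, List.prod_replicate] at h
      exact h.symm
  obtain ⟨a, ha⟩ := hp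
  have hrec : ∀ n, p (n + 1) = star a * p n * a := by
    intro n
    rw [ha, ha, pow_succ, star_mul]
    simp only [mul_assoc]
  have h1 : p 1 = star a * a := by rw [hrec 0, hp0, mul_one]
  have hs1 : star (p 1) = p 1 := (hproj 1).1
  have hap : a * (1 - p 1) = 0 := by
    rw [← CStarRing.star_mul_self_eq_zero_iff]
    have : star (a * (1 - p 1)) * (a * (1 - p 1)) = (1 - p 1) * (star a * a) * (1 - p 1) := by
      rw [star_mul, star_sub, hs1, star_one]
      simp only [mul_assoc]
    rw [this, ← h1, sub_mul, one_mul, (hproj 1).2, sub_self, zero_mul]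
  have hpa : (1 - p 1) * star a = 0 := by
    have := congrArg star hap
    rwa [star_mul, star_sub, hs1, star_one, star_zero] at this
  have hle : TwoSidedIdeal.span {(1 : A) - p k} = TwoSidedIdeal.span {(1 : A) - p 1} := by
    apply le_antisymm
    · rw [TwoSidedIdeal.span_le, Set.singleton_subset_iff]
      have hmem : (1 : A) - p 1 ∈ TwoSidedIdeal.span {(1 : A) - p 1} :=
        TwoSidedIdeal.subset_span rfl
      have : ∀ n, (1 : A) - p n ∈ TwoSidedIdeal.span {(1 : A) - p 1} := by
        intro n
        induction n with
        | zero => rw [hp0, sub_self]; exact TwoSidedIdeal.zero_mem _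
        | succ n ih =>
          have e : (1 : A) - p (n + 1) = (1 - p 1) + star a * (1 - p n) * a := by
            rw [hrec n, h1]; noncomm_ring
          rw [e]
          exact TwoSidedIdeal.add_mem _ hmem
            (TwoSidedIdeal.mul_mem_right _ _ _ (TwoSidedIdeal.mul_mem_left _ _ _ ih))
      exact this k
    · rw [TwoSidedIdeal.span_le, Set.singleton_subset_iff]
      have hmem : (1 : A) - p k ∈ TwoSidedIdeal.span {(1 : A) - p k} :=
        TwoSidedIdeal.subset_span rfl
      obtain ⟨n, rfl⟩ : ∃ n, k = n + 1 := ⟨k - 1, by omega⟩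
      have e : (1 : A) - p 1 = (1 - p 1) * (1 - p (n + 1)) := by
        have : (1 - p 1) * p (n + 1) = 0 := by
          rw [hrec n, ← mul_assoc, ← mul_assoc, hpa, zero_mul, zero_mul]
        rw [mul_sub, this, mul_one, sub_zero]
      rw [e]
      exact TwoSidedIdeal.mul_mem_left _ _ _ hmem
  rw [hle]
end

section
/- Under axioms (A1) and (A2), assume additionally that A equals the smallest closed *-subalgebra of A containing s_0,…,s_{N−1}, and let J be the smallest closed two-sided ideal of A containing e − p_1. If the only closed two-sided ideals of A containing J are J and A itself (i.e. the quotient of A by J is simple), then every closed two-sided ideal of A other than A itself is contained in J. -/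
/-- Under axioms (A1), (A2), assume `A` is the smallest closed
*-subalgebra of itself containing `s 0, …, s (N-1)`, and let `J` be the smallest closed
two-sided ideal containing `1 - p 1`. If the only closed two-sided ideals of `A` containing
`J` are `J` and `A` itself, then every closed two-sided ideal of `A` other than `A` itself is
contained in `J`. -/
theorem stmt12 {A : Type*} [NormedRing A] [StarRing A] [CStarRing A] [CompleteSpace A]
    [NormedAlgebra ℂ A] [StarModule ℂ A]
    (N : ℕ) (hN : 2 ≤ N) (s : Fin N → A) (p : ℕ → A)
    (hp0 : p 0 = 1)
    (hproj : ∀ k : ℕ, IsSelfAdjoint (p k) ∧ p k * p k = p k)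
    (hA1 : ∀ (k : ℕ), 1 ≤ k → ∀ i : Fin k → Fin N,
      star ((List.ofFn fun t => s (i t)).prod) * (List.ofFn fun t => s (i t)).prod = p k)
    (hA2 : ∑ i : Fin N, s i * star (s i) = 1)
    (hgen : (NonUnitalStarAlgebra.adjoin ℂ (Set.range s)).topologicalClosure = ⊤)
    (hsimple : ∀ I : TwoSidedIdeal A, IsClosed (I : Set A) →
      closure ((TwoSidedIdeal.span {(1 : A) - p 1} : TwoSidedIdeal A) : Set A) ⊆ (I : Set A) →
      (I : Set A) = closure ((TwoSidedIdeal.span {(1 : A) - p 1} : TwoSidedIdeal A) : Set A) ∨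
      (I : Set A) = Set.univ)
    (I : TwoSidedIdeal A) (hIclosed : IsClosed (I : Set A))
    (hIproper : (I : Set A) ≠ Set.univ) :
    (I : Set A) ⊆ closure ((TwoSidedIdeal.span {(1 : A) - p 1} : TwoSidedIdeal A) : Set A) := by
  have i0 : Fin N := ⟨0, by omega⟩
  -- words
  have hw : ∀ l : List (Fin N), 1 ≤ l.length →
      star ((l.map s).prod) * (l.map s).prod = p l.length := by
    intro l hl
    have h := hA1 l.length hl (fun t => l.get t)
    have e : (List.ofFn fun t => s (l.get t)) = l.map s := by
      apply List.ext_get <;> simp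
    rwa [e] at h
  have hstep : ∀ (k : ℕ) (j : Fin N), star (s j) * p k * s j = p (k + 1) := by
    intro k j
    rcases Nat.eq_zero_or_pos k with rfl | hk
    · have := hw [j] (by simp)
      simpa [hp0] using this
    · have h1 := hw (List.replicate k i0) (by rw [List.length_replicate]; exact hk)
      have h2 := hw (List.replicate k i0 ++ [j]) (by simp)
      simp only [List.map_append, List.prod_append, List.length_append, List.length_replicate,
        List.map_cons, List.map_nil, List.prod_cons, List.prod_nil, mul_one, star_mul,
        List.length_cons, List.length_nil, zero_add] at h1 h2
      rw [← h2, ← h1]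
      simp only [mul_assoc]
  have hss : ∀ j, star (s j) * s j = p 1 := by
    intro j
    simpa [hp0] using hstep 0 j
  have hsp : ∀ j, s j * p 1 = s j := by
    intro j
    have h : star (s j * p 1 - s j) * (s j * p 1 - s j) = 0 := by
      have a1 : star (p 1) = p 1 := (hproj 1).1
      have a2 := (hproj 1).2
      have : star (s j * p 1 - s j) * (s j * p 1 - s j) =
        p 1 * (star (s j) * s j) * p 1 - p 1 * (star (s j) * s j) - (star (s j) * s j) * p 1
          + star (s j) * s j := by
        simp only [star_sub, star_mul, a1]; noncomm_ring
      rw [this, hss, a2, a2]; simp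
    exact sub_eq_zero.mp (CStarRing.star_mul_self_eq_zero_iff _ |>.mp h)
  have hpp : ∀ k, p (k + 1) * p 1 = p (k + 1) := by
    intro k
    rw [← hstep k i0, mul_assoc, hsp]
  have hcomm : ∀ k j, p k * s j = s j * p (k + 1) := by
    intro k j
    have b1 : star (p k) = p k := (hproj k).1
    have b2 := (hproj k).2
    have c1 : star (p (k+1)) = p (k+1) := (hproj (k+1)).1
    have c2 := (hproj (k+1)).2
    have h : star (p k * s j - s j * p (k+1)) * (p k * s j - s j * p (k+1)) = 0 := by
      have : star (p k * s j - s j * p (k+1)) * (p k * s j - s j * p (k+1)) =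
        star (s j) * (p k * p k) * s j - (star (s j) * p k * s j) * p (k+1)
          - p (k+1) * (star (s j) * p k * s j) + p (k+1) * (star (s j) * s j) * p (k+1) := by
        simp only [star_sub, star_mul, b1, c1]; noncomm_ring
      rw [this, b2, hstep, hss, hpp, c2]; simp
    exact sub_eq_zero.mp (CStarRing.star_mul_self_eq_zero_iff _ |>.mp h)
  have hcomm' : ∀ k j, p (k + 1) * star (s j) = star (s j) * p k := by
    intro k j
    have b1 : star (p k) = p k := (hproj k).1
    have c1 : star (p (k+1)) = p (k+1) := (hproj (k+1)).1
    have := congrArg star (hcomm k j)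
    simpa [star_mul, b1, c1] using this.symm
  have hnorm : ∀ k, ‖p k‖ ≤ 1 := by
    intro k
    have h := CStarRing.norm_star_mul_self (x := p k)
    have b1 : star (p k) = p k := (hproj k).1
    rw [b1, (hproj k).2] at h
    by_contra hc
    push Not at hc
    nlinarith
  let T : Set A := {c | ∀ ε : ℝ, 0 < ε → ∀ᶠ k in Filter.atTop, ∃ y ∈ I, ‖p k * c - y‖ < ε}
  have Tzero : (0 : A) ∈ T := fun ε hε =>
    Filter.Eventually.of_forall fun k => ⟨0, I.zero_mem, by simpa using hε⟩
  have Tadd : ∀ {x y}, x ∈ T → y ∈ T → x + y ∈ T := by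
    intro x y hx hy ε hε
    filter_upwards [hx (ε/2) (by linarith), hy (ε/2) (by linarith)] with k ⟨u, hu, hu'⟩ ⟨v, hv, hv'⟩
    refine ⟨u + v, I.add_mem hu hv, ?_⟩
    have : p k * (x + y) - (u + v) = (p k * x - u) + (p k * y - v) := by noncomm_ring
    rw [this]
    exact (norm_add_le _ _).trans_lt (by linarith)
  have Tneg : ∀ {x}, x ∈ T → -x ∈ T := by
    intro x hx ε hε
    filter_upwards [hx ε hε] with k ⟨u, hu, hu'⟩
    refine ⟨-u, I.neg_mem hu, ?_⟩
    have : p k * (-x) - (-u) = -(p k * x - u) := by noncomm_ring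
    rwa [this, norm_neg]
  have Tright : ∀ {x} (a : A), x ∈ T → x * a ∈ T := by
    intro x a hx ε hε
    have hpos : 0 < ‖a‖ + 1 := by positivity
    filter_upwards [hx (ε / (‖a‖ + 1)) (by positivity)] with k ⟨u, hu, hu'⟩
    refine ⟨u * a, I.mul_mem_right _ _ hu, ?_⟩
    have : p k * (x * a) - u * a = (p k * x - u) * a := by noncomm_ring
    rw [this]
    rw [lt_div_iff₀ hpos] at hu'
    have h0 := norm_nonneg (p k * x - u)
    have := norm_mul_le (p k * x - u) a
    nlinarith
  have Tclosed : IsClosed T := by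
    rw [← closure_subset_iff_isClosed]
    intro c hc ε hε
    obtain ⟨d, hd, hcd⟩ := Metric.mem_closure_iff.mp hc (ε/2) (by linarith)
    filter_upwards [hd (ε/2) (by linarith)] with k ⟨u, hu, hu'⟩
    refine ⟨u, hu, ?_⟩
    have : p k * c - u = p k * (c - d) + (p k * d - u) := by noncomm_ring
    rw [this]
    rw [dist_eq_norm] at hcd
    have h1 := norm_mul_le (p k) (c - d)
    have h2 := hnorm k
    have h3 := norm_nonneg (c - d)
    refine (norm_add_le _ _).trans_lt ?_
    nlinarith
  have Tleft_aux : ∀ (a : A) (f : ℕ → ℕ), Filter.Tendsto f Filter.atTop Filter.atTop →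
      (∀ᶠ k in Filter.atTop, p k * a = a * p (f k)) → ∀ c ∈ T, a * c ∈ T := by
    intro a f hf ha x hx ε hε
    have hpos : 0 < ‖a‖ + 1 := by positivity
    filter_upwards [hf.eventually (hx (ε / (‖a‖ + 1)) (by positivity)), ha] with k ⟨u, hu, hu'⟩ hk
    refine ⟨a * u, I.mul_mem_left _ _ hu, ?_⟩
    have : p k * (a * x) - a * u = a * (p (f k) * x - u) := by
      rw [← mul_assoc, hk]; noncomm_ring
    rw [this]
    rw [lt_div_iff₀ hpos] at hu'
    have h0 := norm_nonneg (p (f k) * x - u)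
    have := norm_mul_le a (p (f k) * x - u)
    nlinarith
  let M : Set A := {a | ∀ c ∈ T, a * c ∈ T}
  have Mclosed : IsClosed M := by
    have : M = ⋂ c ∈ T, (fun a => a * c) ⁻¹' T := by
      ext a; simp [M]
    rw [this]
    exact isClosed_biInter fun c _ => Tclosed.preimage (by fun_prop)
  have Mgen : ∀ j, s j ∈ M := fun j =>
    Tleft_aux (s j) (fun k => k + 1) (Filter.tendsto_add_atTop_nat 1)
      (Filter.Eventually.of_forall fun k => hcomm k j)
  have Mgen' : ∀ j, star (s j) ∈ M := fun j =>
    Tleft_aux (star (s j)) (fun k => k - 1) (Filter.tendsto_sub_atTop_nat 1) (by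
      filter_upwards [Filter.eventually_ge_atTop 1] with k hk
      obtain ⟨m, rfl⟩ : ∃ m, k = m + 1 := ⟨k - 1, by omega⟩
      simpa using hcomm' m j)
  have Madj : ∀ a ∈ NonUnitalStarAlgebra.adjoin ℂ (Set.range s), a ∈ M ∧ star a ∈ M := by
    intro a ha
    induction ha using NonUnitalStarAlgebra.adjoin_induction with
    | mem x hx =>
      obtain ⟨j, rfl⟩ := hx
      exact ⟨Mgen j, Mgen' j⟩
    | add x y _ _ hx hy =>
      refine ⟨fun c hc => ?_, fun c hc => ?_⟩
      · rw [add_mul]; exact Tadd (hx.1 c hc) (hy.1 c hc)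
      · rw [star_add, add_mul]; exact Tadd (hx.2 c hc) (hy.2 c hc)
    | zero =>
      refine ⟨fun c hc => ?_, fun c hc => ?_⟩
      · simpa using Tzero
      · simpa using Tzero
    | mul x y _ _ hx hy =>
      refine ⟨fun c hc => ?_, fun c hc => ?_⟩
      · rw [mul_assoc]; exact hx.1 _ (hy.1 c hc)
      · rw [star_mul, mul_assoc]; exact hy.2 _ (hx.2 c hc)
    | smul r x _ hx =>
      refine ⟨fun c hc => ?_, fun c hc => ?_⟩
      · have := Tright (r • (1 : A)) (hx.1 c hc)
        simpa using this
      · have := Tright (star r • (1 : A)) (hx.2 c hc)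
        simpa [star_smul] using this
    | star x _ hx => exact ⟨hx.2, by simpa using hx.1⟩
  have Mall : ∀ a, a ∈ M := by
    intro a
    have h : a ∈ (NonUnitalStarAlgebra.adjoin ℂ (Set.range s)).topologicalClosure := by
      rw [hgen]; trivial
    have h' : a ∈ closure ((NonUnitalStarAlgebra.adjoin ℂ (Set.range s) :
      NonUnitalStarSubalgebra ℂ A) : Set A) := h
    exact closure_minimal (fun x hx => (Madj x hx).1) Mclosed h'
  let K : TwoSidedIdeal A := TwoSidedIdeal.mk' T Tzero Tadd Tneg
    (fun {x y} hy => Mall x y hy) (fun {x y} hx => Tright y hx)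
  have hK : (K : Set A) = T := by
    ext x
    exact TwoSidedIdeal.mem_mk' ..
  have h1 : (1 : A) - p 1 ∈ T := by
    intro ε hε
    filter_upwards [Filter.eventually_ge_atTop 1] with k hk
    obtain ⟨m, rfl⟩ : ∃ m, k = m + 1 := ⟨k - 1, by omega⟩
    exact ⟨0, I.zero_mem, by simpa [mul_sub, hpp] using hε⟩
  have hIT : (I : Set A) ⊆ T := by
    intro x hx ε hε
    exact Filter.Eventually.of_forall fun k => ⟨p k * x, I.mul_mem_left _ _ hx, by simpa using hε⟩
  have hJ : closure ((TwoSidedIdeal.span {(1 : A) - p 1} : TwoSidedIdeal A) : Set A) ⊆ K := by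
    rw [hK]
    refine closure_minimal ?_ Tclosed
    have : TwoSidedIdeal.span {(1 : A) - p 1} ≤ K := by
      rw [TwoSidedIdeal.span_le, hK]
      simpa using h1
    rw [← hK]
    exact this
  rcases hsimple K (by rw [hK]; exact Tclosed) hJ with h | h
  · rw [← h, hK]; exact hIT
  · exfalso
    apply hIproper
    have hone : (1 : A) ∈ T := by rw [← hK, h]; trivial
    obtain ⟨k, y, hy, hky⟩ := (hone 1 one_pos).exists
    rw [mul_one] at hky
    have hpk : p k ∈ I := by
      have hu : IsUnit (1 - (p k - y)) := isUnit_one_sub_of_norm_lt_one hky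
      obtain ⟨u, hu⟩ := hu
      have e : p k * (u : A) = p k * y := by
        rw [hu, mul_sub, mul_sub, (hproj k).2]; simp
      have : p k = p k * y * (↑u⁻¹ : A) := by rw [← e, mul_assoc]; simp
      rw [this]
      exact I.mul_mem_right _ _ (I.mul_mem_left _ _ hy)
    have hdown : ∀ k, p k ∈ I → (1 : A) ∈ I := by
      intro k
      induction k with
      | zero => intro h; rwa [hp0] at h
      | succ m ih =>
        intro h
        apply ih
        have : p m = ∑ j, s j * p (m+1) * star (s j) := by
          simp_rw [← hcomm, mul_assoc, ← Finset.mul_sum, hA2, mul_one]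
        rw [this]
        exact sum_mem fun j _ => I.mul_mem_right _ _ (I.mul_mem_left _ _ h)
    have h1I := hdown k hpk
    ext x
    simp only [Set.mem_univ, iff_true]
    have := I.mul_mem_left x 1 h1I
    rwa [mul_one] at this
end

section
/- The C*-algebra C_N is simple: every closed two-sided ideal of C_N is either {0} or all of C_N. -/
/-- `J` is a closed two-sided ideal of (the C*-subalgebra of operators with carrier) `M`:
`J` is a closed subset of `M` containing `0`, closed under addition and complex scalar
multiplication, and absorbing under left and right multiplication by elements of `M`. -/
def IsClosedIdealOf {X : Type*} [NonUnitalNormedRing X] [NormedSpace ℂ X]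
    (M J : Set X) : Prop :=
  IsClosed J ∧ J ⊆ M ∧ (0 : X) ∈ J ∧
    (∀ x ∈ J, ∀ y ∈ J, x + y ∈ J) ∧
    (∀ (c : ℂ), ∀ x ∈ J, c • x ∈ J) ∧
    (∀ a ∈ M, ∀ x ∈ J, a * x ∈ J ∧ x * a ∈ J)

lemma aux_mod {N i : ℕ} (r : ℕ) (hi : i < N) : (r * N + i) % N = i := by
  rw [Nat.mul_add_mod', Nat.mod_eq_of_lt hi]

section aux
set_option linter.unusedSectionVars false
variable {H2 : Type*} [NormedAddCommGroup H2] [InnerProductSpace ℂ H2] [CompleteSpace H2]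

lemma aux_inner_s15 (f : HilbertBasis (ℕ × ℕ) ℂ H2) (p q : ℕ × ℕ) :
    inner ℂ (f p) (f q) = if p = q then (1 : ℂ) else 0 :=
  orthonormal_iff_ite.mp f.orthonormal p q

lemma aux_vext (f : HilbertBasis (ℕ × ℕ) ℂ H2) {x y : H2}
    (h : ∀ p, inner ℂ (f p) x = inner ℂ (f p) y) : x = y := by
  apply f.repr.injective
  ext p
  rw [f.repr_apply_apply, f.repr_apply_apply, h]

lemma aux_opext (f : HilbertBasis (ℕ × ℕ) ℂ H2) {A B : H2 →L[ℂ] H2}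
    (h : ∀ m r, A (f (m, r)) = B (f (m, r))) : A = B := by
  apply ContinuousLinearMap.ext_on (s := Set.range f)
  · have := f.dense_span
    rw [Submodule.dense_iff_topologicalClosure_eq_top]
    exact this
  · rintro _ ⟨⟨m, r⟩, rfl⟩
    exact h m r

lemma aux_mulstar (A : H2 →L[ℂ] H2) (x y : H2) :
    inner ℂ x ((star A) y) = inner ℂ (A x) y := by
  rw [ContinuousLinearMap.star_eq_adjoint, ContinuousLinearMap.adjoint_inner_right]

lemma aux_mulstar' (A : H2 →L[ℂ] H2) (x y : H2) :
    inner ℂ x (A y) = inner ℂ ((star A) x) y := by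
  rw [ContinuousLinearMap.star_eq_adjoint, ContinuousLinearMap.adjoint_inner_left]

lemma aux_diag_idem (f : HilbertBasis (ℕ × ℕ) ℂ H2) (P : ℕ → Prop) [DecidablePred P]
    (D : H2 →L[ℂ] H2) (hD : ∀ m r, D (f (m, r)) = if P m then f (m, r) else 0) :
    D * D = D := by
  apply aux_opext f
  intro m r
  rw [mul_apply_eq_comp, hD]
  split_ifs with h
  · rw [hD, if_pos h]
  · simp

lemma aux_diag_star (f : HilbertBasis (ℕ × ℕ) ℂ H2) (P : ℕ → Prop) [DecidablePred P]
    (D : H2 →L[ℂ] H2) (hD : ∀ m r, D (f (m, r)) = if P m then f (m, r) else 0) :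
    star D = D := by
  apply aux_opext f
  intro m r
  apply aux_vext f
  rintro ⟨m', r'⟩
  rw [aux_mulstar, hD, hD]
  by_cases h1 : P m <;> by_cases h2 : P m' <;> simp only [h1, h2, if_true, if_false, inner_zero_left, inner_zero_right, aux_inner_s15]
  · rw [if_neg]; rintro h; simp only [Prod.mk.injEq] at h; exact h2 (h.1 ▸ h1)
  · rw [if_neg]; rintro h; simp only [Prod.mk.injEq] at h; exact h1 (h.1 ▸ h2)

lemma aux_diag_norm (f : HilbertBasis (ℕ × ℕ) ℂ H2) (P : ℕ → Prop) [DecidablePred P]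
    (D : H2 →L[ℂ] H2) (hD : ∀ m r, D (f (m, r)) = if P m then f (m, r) else 0) :
    ‖D‖ ≤ 1 := by
  have h := CStarRing.norm_star_mul_self (x := D)
  rw [aux_diag_star f P D hD, aux_diag_idem f P D hD] at h
  nlinarith [norm_nonneg D]

lemma aux_adj (f : HilbertBasis (ℕ × ℕ) ℂ H2) (N : ℕ) (hN : 2 ≤ N)
    (Sg : Fin N → H2 →L[ℂ] H2)
    (hSg : ∀ (i : Fin N) (m r : ℕ),
      Sg i (f (m, r)) = if m = 0 then 0 else f (m - 1, r * N + (i : ℕ)))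
    (i : Fin N) (m k : ℕ) :
    (star (Sg i)) (f (m, k)) = if k % N = i then f (m + 1, k / N) else 0 := by
  apply aux_vext f
  rintro ⟨m', r'⟩
  rw [aux_mulstar, hSg]
  have hi := i.2
  have key : r' * N + i = k ↔ (k % N = i ∧ r' = k / N) := by
    constructor
    · rintro rfl
      constructor
      · rw [aux_mod _ hi]
      · rw [mul_comm, Nat.mul_add_div (by omega), Nat.div_eq_of_lt hi]; simp
    · rintro ⟨h1, rfl⟩
      rw [← h1]; exact Nat.div_add_mod' k N
  by_cases h0 : m' = 0
  · subst h0
    rw [if_pos rfl]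
    split_ifs <;> simp [aux_inner_s15]
  · rw [if_neg h0, aux_inner_s15]
    by_cases h1 : k % N = i
    · rw [if_pos h1, aux_inner_s15]
      congr 1
      simp only [Prod.mk.injEq, key, h1, true_and]
      apply propext
      constructor <;> rintro ⟨h, h'⟩ <;> refine ⟨by omega, h'⟩
    · rw [if_neg h1, inner_zero_right, if_neg]
      simp only [Prod.mk.injEq, key, h1, false_and, and_false, not_false_eq_true]

lemma aux_sum (f : HilbertBasis (ℕ × ℕ) ℂ H2) (N : ℕ) (hN : 2 ≤ N)
    (Sg : Fin N → H2 →L[ℂ] H2)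
    (hSg : ∀ (i : Fin N) (m r : ℕ),
      Sg i (f (m, r)) = if m = 0 then 0 else f (m - 1, r * N + (i : ℕ)))
    (P : ℕ → Prop) [DecidablePred P]
    (D : H2 →L[ℂ] H2) (hD : ∀ m r, D (f (m, r)) = if P m then f (m, r) else 0) (m r : ℕ) :
    (∑ i, Sg i * D * star (Sg i)) (f (m, r)) = if P (m+1) then f (m, r) else 0 := by
  rw [_root_.sum_apply]
  have hlt : r % N < N := Nat.mod_lt _ (by omega)
  rw [Finset.sum_eq_single (⟨r % N, hlt⟩ : Fin N)]
  · rw [mul_apply_eq_comp, mul_apply_eq_comp,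
      aux_adj f N hN Sg hSg, if_pos rfl, hD]
    split_ifs
    · rw [hSg, if_neg (by omega)]
      simp only [add_tsub_cancel_right, Nat.div_add_mod']
    · simp
  · intro i _ hi
    rw [mul_apply_eq_comp, 
      aux_adj f N hN Sg hSg, if_neg, map_zero]
    intro h
    exact hi (Fin.ext h.symm)
  · simp

lemma aux_Sg_norm (f : HilbertBasis (ℕ × ℕ) ℂ H2) (N : ℕ) (hN : 2 ≤ N)
    (Sg : Fin N → H2 →L[ℂ] H2)
    (hSg : ∀ (i : Fin N) (m r : ℕ),
      Sg i (f (m, r)) = if m = 0 then 0 else f (m - 1, r * N + (i : ℕ))) (i : Fin N) :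
    ‖Sg i‖ ≤ 1 := by
  have h := CStarRing.norm_star_mul_self (x := Sg i)
  have h2 : ‖star (Sg i) * Sg i‖ ≤ 1 := by
    apply aux_diag_norm f (fun m => m ≠ 0)
    intro m r
    rw [mul_apply_eq_comp, hSg]
    by_cases h0 : m = 0
    · simp [h0]
    · have hi := i.2
      rw [if_neg h0, aux_adj f N hN Sg hSg, if_pos (aux_mod _ hi), if_pos h0]
      rw [mul_comm r N, Nat.mul_add_div (by omega), Nat.div_eq_of_lt hi]
      congr 2; omega
  nlinarith [norm_nonneg (Sg i)]

/-- eventual tail invariance of matrix coefficients -/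
def auxP (f : HilbertBasis (ℕ × ℕ) ℂ H2) (N : ℕ) (w : H2 →L[ℂ] H2) : Prop :=
  ∀ m' m : ℕ, ∃ L0, ∀ L, L0 ≤ L → ∀ a b q' q, a < N ^ (L - m') → b < N ^ (L - m) →
    inner ℂ (f (m', q' * N ^ (L - m') + a)) (w (f (m, q * N ^ (L - m) + b))) =
      if q' = q then inner ℂ (f (m', a)) (w (f (m, b))) else 0

lemma auxP_one (f : HilbertBasis (ℕ × ℕ) ℂ H2) (N : ℕ) : auxP f N 1 := by
  intro m' m
  refine ⟨0, fun L _ a b q' q ha hb => ?_⟩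
  simp only [one_apply_eq_self, aux_inner_s15, Prod.mk.injEq]
  by_cases hm : m' = m
  · subst hm
    have : q' * N ^ (L - m') + a = q * N ^ (L - m') + b ↔ q' = q ∧ a = b := by
      constructor
      · intro h
        have hp : 0 < N ^ (L - m') := by omega
        have h1 := congrArg (· / N ^ (L - m')) h
        have h2 := congrArg (· % N ^ (L - m')) h
        simp only [aux_mod _ ha, aux_mod _ hb] at h2
        refine ⟨?_, h2⟩
        subst h2
        have := Nat.add_right_cancel h
        exact Nat.eq_of_mul_eq_mul_right hp this
      · rintro ⟨rfl, rfl⟩; rfl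
    simp only [this, true_and]
    split_ifs <;> simp_all
  · simp [hm]

lemma auxP_add (f : HilbertBasis (ℕ × ℕ) ℂ H2) (N : ℕ) {v w : H2 →L[ℂ] H2}
    (hv : auxP f N v) (hw : auxP f N w) : auxP f N (v + w) := by
  intro m' m
  obtain ⟨L1, h1⟩ := hv m' m
  obtain ⟨L2, h2⟩ := hw m' m
  refine ⟨max L1 L2, fun L hL a b q' q ha hb => ?_⟩
  rw [add_apply, add_apply, inner_add_right,
    inner_add_right, h1 L (by omega) a b q' q ha hb, h2 L (by omega) a b q' q ha hb]
  split_ifs <;> simp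

lemma auxP_smul (f : HilbertBasis (ℕ × ℕ) ℂ H2) (N : ℕ) (c : ℂ) {v : H2 →L[ℂ] H2}
    (hv : auxP f N v) : auxP f N (c • v) := by
  intro m' m
  obtain ⟨L1, h1⟩ := hv m' m
  refine ⟨L1, fun L hL a b q' q ha hb => ?_⟩
  rw [smul_apply, smul_apply, inner_smul_right,
    inner_smul_right, h1 L (by omega) a b q' q ha hb]
  split_ifs <;> simp

lemma auxP_zero (f : HilbertBasis (ℕ × ℕ) ℂ H2) (N : ℕ) : auxP f N 0 := by
  simpa using auxP_smul f N 0 (auxP_one f N)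

lemma auxP_star (f : HilbertBasis (ℕ × ℕ) ℂ H2) (N : ℕ) 
    (Sg : Fin N → H2 →L[ℂ] H2)
    (hSg : ∀ (i : Fin N) (m r : ℕ),
      Sg i (f (m, r)) = if m = 0 then 0 else f (m - 1, r * N + (i : ℕ))) (i : Fin N)
    {v : H2 →L[ℂ] H2} (hv : auxP f N v) : auxP f N (star (Sg i) * v) := by
  intro m' m
  obtain ⟨L1, h1⟩ := hv (m' - 1) m
  refine ⟨max L1 m', fun L hL a b q' q ha hb => ?_⟩
  simp only [mul_apply_eq_comp, aux_mulstar, hSg]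
  by_cases h0 : m' = 0
  · simp [h0]
  · simp only [if_neg h0]
    have e : L - (m' - 1) = (L - m') + 1 := by omega
    have hlt : a * N + i < N ^ (L - (m' - 1)) := by
      rw [e, pow_succ]
      have hi := i.2
      have : (a + 1) * N ≤ N ^ (L - m') * N := Nat.mul_le_mul_right _ ha
      rw [add_mul] at this
      omega
    have := h1 L (by omega) (a * N + i) b q' q hlt hb
    rw [← this, e]
    congr 3
    ring

lemma auxP_Sg (f : HilbertBasis (ℕ × ℕ) ℂ H2) (N : ℕ) (hN : 2 ≤ N)
    (Sg : Fin N → H2 →L[ℂ] H2)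
    (hSg : ∀ (i : Fin N) (m r : ℕ),
      Sg i (f (m, r)) = if m = 0 then 0 else f (m - 1, r * N + (i : ℕ))) (i : Fin N)
    {v : H2 →L[ℂ] H2} (hv : auxP f N v) : auxP f N (Sg i * v) := by
  intro m' m
  obtain ⟨L1, h1⟩ := hv (m' + 1) m
  refine ⟨max L1 (m' + 1), fun L hL a b q' q ha hb => ?_⟩
  simp only [mul_apply_eq_comp, aux_mulstar' (Sg i), aux_adj f N hN Sg hSg]
  obtain ⟨k, hk⟩ : ∃ k, L = m' + 1 + k := ⟨L - (m' + 1), by omega⟩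
  have e : L - m' = k + 1 := by omega
  have e' : L - (m' + 1) = k := by omega
  have hlt : a / N < N ^ (L - (m' + 1)) := by
    rw [e']
    rw [e, pow_succ] at ha
    exact Nat.div_lt_of_lt_mul (by rwa [mul_comm] at ha)
  have key : q' * N ^ (L - m') + a = N * (q' * N ^ k) + a := by rw [e]; ring
  have := h1 L (by omega) (a / N) b q' q hlt hb
  rw [key, Nat.mul_add_mod, Nat.mul_add_div (by omega)]
  rw [e'] at this
  by_cases h : a % N = i
  · simp only [h, if_true]
    exact this
  · simp [h]

lemma auxP_adjoin (f : HilbertBasis (ℕ × ℕ) ℂ H2) (N : ℕ) (hN : 2 ≤ N)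
    (Sg : Fin N → H2 →L[ℂ] H2)
    (hSg : ∀ (i : Fin N) (m r : ℕ),
      Sg i (f (m, r)) = if m = 0 then 0 else f (m - 1, r * N + (i : ℕ)))
    (w : H2 →L[ℂ] H2) (hw : w ∈ NonUnitalStarAlgebra.adjoin ℂ (Set.range Sg)) :
    auxP f N w := by
  have : ∀ v, auxP f N v → auxP f N (w * v) ∧ auxP f N (star w * v) := by
    induction hw using NonUnitalStarAlgebra.adjoin_induction with
    | mem x hx =>
      obtain ⟨i, rfl⟩ := hx
      exact fun v hv => ⟨auxP_Sg f N hN Sg hSg i hv, auxP_star f N Sg hSg i hv⟩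
    | add x y _ _ hx hy =>
      intro v hv
      rw [star_add, add_mul, add_mul]
      exact ⟨auxP_add f N (hx v hv).1 (hy v hv).1, auxP_add f N (hx v hv).2 (hy v hv).2⟩
    | zero => intro v hv; simpa using auxP_zero f N
    | mul x y _ _ hx hy =>
      intro v hv
      rw [star_mul, mul_assoc, mul_assoc]
      exact ⟨(hx _ (hy v hv).1).1, (hy _ (hx v hv).2).2⟩
    | smul c x _ hx =>
      intro v hv
      rw [star_smul, smul_mul_assoc, smul_mul_assoc]
      exact ⟨auxP_smul f N c (hx v hv).1, auxP_smul f N _ (hx v hv).2⟩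
    | star x _ hx =>
      intro v hv
      rw [star_star]
      exact ⟨(hx v hv).2, (hx v hv).1⟩
  simpa using (this 1 (auxP_one f N)).1

end aux

/-- `H2` models `ℓ²(ℤ⁺, ℓ²(ℤ⁺))`, with orthonormal basis `f (m, r)`
(the vector whose `m`-th component is the `r`-th basis vector of `ℓ²(ℤ⁺)`). `Sg i` models the
block Toeplitz operator `Σᵢ` with `S i` on the first superdiagonal:
`Σᵢ f(m,r) = f(m-1, r*N+i)` for `m ≥ 1` and `Σᵢ f(0,r) = 0`. `Pi1` models
`Π₁ = diag(I,0,0,…)`. `T_N` is the smallest closed *-subalgebra containing the `Σᵢ`, and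
`C_N` the smallest closed two-sided ideal of `T_N` containing `Π₁`. The claim: `C_N` is
simple — every closed two-sided ideal of `C_N` is `{0}` or `C_N`. -/
theorem stmt15 {H2 : Type*} [NormedAddCommGroup H2] [InnerProductSpace ℂ H2]
    [CompleteSpace H2]
    (f : HilbertBasis (ℕ × ℕ) ℂ H2) (N : ℕ) (hN : 2 ≤ N)
    (Sg : Fin N → H2 →L[ℂ] H2)
    (hSg : ∀ (i : Fin N) (m r : ℕ),
      Sg i (f (m, r)) = if m = 0 then 0 else f (m - 1, r * N + (i : ℕ)))
    (Pi1 : H2 →L[ℂ] H2)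
    (hPi1 : ∀ m r : ℕ, Pi1 (f (m, r)) = if m = 0 then f (m, r) else 0)
    (J : Set (H2 →L[ℂ] H2))
    (hJ : IsClosedIdealOf
      (⋂₀ {K : Set (H2 →L[ℂ] H2) |
        IsClosedIdealOf
          ((NonUnitalStarAlgebra.adjoin ℂ (Set.range Sg)).topologicalClosure :
            Set (H2 →L[ℂ] H2)) K ∧ Pi1 ∈ K})
      J) :
    J = {0} ∨
      J = ⋂₀ {K : Set (H2 →L[ℂ] H2) |
        IsClosedIdealOf
          ((NonUnitalStarAlgebra.adjoin ℂ (Set.range Sg)).topologicalClosure :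
            Set (H2 →L[ℂ] H2)) K ∧ Pi1 ∈ K} := by
  classical
  set A := (NonUnitalStarAlgebra.adjoin ℂ (Set.range Sg)) with hA
  set T : NonUnitalStarSubalgebra ℂ (H2 →L[ℂ] H2) := A.topologicalClosure with hT
  set C : Set (H2 →L[ℂ] H2) := ⋂₀ {K : Set (H2 →L[ℂ] H2) |
        IsClosedIdealOf (T : Set (H2 →L[ℂ] H2)) K ∧ Pi1 ∈ K} with hC
  have hSgT : ∀ i, Sg i ∈ T := fun i =>
    NonUnitalStarSubalgebra.le_topologicalClosure _
      (NonUnitalStarAlgebra.subset_adjoin ℂ _ (Set.mem_range_self i))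
  have hTcl : IsClosed (T : Set (H2 →L[ℂ] H2)) :=
    NonUnitalStarSubalgebra.isClosed_topologicalClosure _
  have hsum1 : (1 : H2 →L[ℂ] H2) = ∑ i, Sg i * 1 * star (Sg i) := by
    apply aux_opext f
    intro m r
    rw [aux_sum f N hN Sg hSg (fun _ => True) 1 (by simp)]
    simp
  have h1T : (1 : H2 →L[ℂ] H2) ∈ T := by
    rw [hsum1]
    refine sum_mem fun i _ => ?_
    rw [mul_one]
    exact mul_mem (hSgT i) (star_mem (hSgT i))
  let i0 : Fin N := ⟨0, by omega⟩
  have hPiC : Pi1 ∈ C := fun K hK => hK.2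
  have hCl : ∀ t ∈ T, ∀ x ∈ C, t * x ∈ C := fun t ht x hx K hK =>
    (hK.1.2.2.2.2.2 t ht x (hx K hK)).1
  have hCr : ∀ t ∈ T, ∀ x ∈ C, x * t ∈ C := fun t ht x hx K hK =>
    (hK.1.2.2.2.2.2 t ht x (hx K hK)).2
  have hCadd : ∀ x ∈ C, ∀ y ∈ C, x + y ∈ C := fun x hx y hy K hK =>
    hK.1.2.2.2.1 x (hx K hK) y (hy K hK)
  have hCsm : ∀ (c : ℂ), ∀ x ∈ C, c • x ∈ C := fun c x hx K hK =>
    hK.1.2.2.2.2.1 c x (hx K hK)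
  obtain ⟨hJcl, hJC, hJ0, hJadd, hJsm, hJm⟩ := hJ
  -- C ⊆ T
  have hPiT : Pi1 ∈ T := by
    have : Pi1 = 1 + (-1 : ℂ) • (star (Sg i0) * Sg i0) := by
      apply aux_opext f
      intro m r
      rw [hPi1]
      simp only [add_apply, smul_apply,
        one_apply_eq_self, mul_apply_eq_comp, hSg]
      by_cases h0 : m = 0
      · simp [h0]
      · simp only [h0, if_false, aux_adj f N hN Sg hSg, i0, add_zero, Nat.mul_mod_left, if_true]
        rw [Nat.mul_div_cancel _ (by omega), Nat.sub_add_cancel (by omega)]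
        simp
    rw [this]
    exact add_mem h1T (SMulMemClass.smul_mem _ (mul_mem (star_mem (hSgT i0)) (hSgT i0)))
  have hCT : C ⊆ T := by
    intro x hx
    refine hx T ⟨⟨hTcl, le_refl _, zero_mem _, fun x hx y hy => add_mem hx hy,
      fun c x hx => SMulMemClass.smul_mem c hx,
      fun a ha x hx => ⟨mul_mem ha hx, mul_mem hx ha⟩⟩, hPiT⟩
  -- level projections
  have hQ : ∀ n : ℕ, ∃ Q ∈ C, ∀ m r, Q (f (m, r)) = if m = n then f (m, r) else 0 := by
    intro n
    induction n with
    | zero => exact ⟨Pi1, hPiC, hPi1⟩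
    | succ n ih =>
      obtain ⟨Q, hQC, hQ⟩ := ih
      refine ⟨star (Sg i0) * (Q * Sg i0), hCl _ (star_mem (hSgT i0)) _ (hCr _ (hSgT i0) _ hQC), ?_⟩
      intro m r
      simp only [mul_apply_eq_comp, hSg]
      by_cases h0 : m = 0
      · simp [h0]
      · simp only [h0, if_false, hQ]
        by_cases h1 : m = n + 1
        · subst h1
          simp only [add_tsub_cancel_right, if_true, aux_adj f N hN Sg hSg, i0, add_zero,
            Nat.mul_mod_left]
          rw [Nat.mul_div_cancel _ (by omega)]
        · rw [if_neg (by omega), if_neg h1, map_zero]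
  choose Q hQC hQf using hQ
  have hQi : ∀ n, Q n * Q n = Q n := fun n => aux_diag_idem f (fun m => m = n) _ (hQf n)
  have hQs : ∀ n, star (Q n) = Q n := fun n => aux_diag_star f (fun m => m = n) _ (hQf n)
  have hQn : ∀ n, ‖Q n‖ ≤ 1 := fun n => aux_diag_norm f (fun m => m = n) _ (hQf n)
  have hQ0 : Q 0 = Pi1 := aux_opext f fun m r => by rw [hQf, hPi1]
  have hTQT : ∀ n, Q n ∈ J → ∀ t ∈ T, ∀ s ∈ T, t * Q n * s ∈ J := by
    intro n hn t ht s hs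
    have : t * Q n * s = (t * Q n) * Q n * (Q n * s) := by
      simp only [mul_assoc]
      rw [← mul_assoc (Q n) (Q n) s, hQi, ← mul_assoc (Q n) (Q n) s, hQi]
    rw [this]
    exact (hJm _ (hCr s hs _ (hQC n)) _ ((hJm _ (hCl t ht _ (hQC n)) _ hn).1)).2
  have hdown : ∀ n, Q n ∈ J → Pi1 ∈ J := by
    intro n
    induction n with
    | zero => intro h; rwa [hQ0] at h
    | succ n ih =>
      intro h
      apply ih
      have : Q n = ∑ i, Sg i * Q (n+1) * star (Sg i) := by
        apply aux_opext f
        intro m r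
        rw [aux_sum f N hN Sg hSg (fun m => m = n + 1) (Q (n+1)) (hQf (n+1)), hQf]
        simp
      rw [this]
      exact Finset.sum_induction _ (fun x => x ∈ J) (fun x y hx hy => hJadd x hx y hy) hJ0
        (fun i _ => hTQT _ h _ (hSgT i) _ (star_mem (hSgT i)))
  -- the partial isometries
  have hU : ∀ K a m, a < N ^ K → ∃ U ∈ T, U * Q (m + K) = U ∧ ‖U‖ ≤ 1 ∧ ∀ n q, U (f (n, q)) =
      if n = m + K then f (m, q * N ^ K + a) else 0 := by
    intro K
    induction K with
    | zero =>
      intro a m ha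
      refine ⟨Q m, hCT (hQC m), hQi m, hQn m, ?_⟩
      intro n q
      have : a = 0 := by simpa using ha
      subst this
      rw [hQf]
      by_cases h : n = m <;> simp [h]
    | succ K ih =>
      intro a m ha
      obtain ⟨U, hUT, hUQ, hUn, hU⟩ := ih (a / N) (m + 1)
        (Nat.div_lt_of_lt_mul (by rwa [pow_succ, mul_comm] at ha))
      let i : Fin N := ⟨a % N, Nat.mod_lt _ (by omega)⟩
      have e : m + 1 + K = m + (K + 1) := by ring
      refine ⟨Sg i * U, mul_mem (hSgT i) hUT, ?_, ?_, ?_⟩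
      · rw [mul_assoc, ← e, hUQ]
      · calc ‖Sg i * U‖ ≤ ‖Sg i‖ * ‖U‖ := norm_mul_le _ _
          _ ≤ 1 * 1 := mul_le_mul (aux_Sg_norm f N hN Sg hSg i) hUn (norm_nonneg _) zero_le_one
          _ = 1 := one_mul 1
      · intro n q
        rw [mul_apply_eq_comp, hU, e]
        split_ifs with h
        · rw [hSg, if_neg (by omega)]
          have : (q * N ^ K + a / N) * N + (i : ℕ) = q * N ^ (K + 1) + a := by
            rw [add_mul, add_assoc, Nat.div_add_mod' a N]; ring
          rw [this]; rfl
        · simp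
  by_cases hJz : J = {0}
  · exact Or.inl hJz
  right
  obtain ⟨x, hxJ, hx0⟩ : ∃ x ∈ J, x ≠ 0 := by
    by_contra! h
    exact hJz (Set.eq_singleton_iff_unique_mem.mpr ⟨hJ0, h⟩)
  -- Q L ∈ J for some L
  have hmain : ∃ L, Q L ∈ J := by
    obtain ⟨m', a, m, b, hc⟩ : ∃ m' a m b, inner ℂ (f (m', a)) (x (f (m, b))) ≠ 0 := by
      by_contra! h
      apply hx0
      apply aux_opext f
      intro m r
      apply aux_vext f
      rintro ⟨m', r'⟩
      simp [h]
    set c := inner ℂ (f (m', a)) (x (f (m, b))) with hcdef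
    have hcpos : 0 < ‖c‖ := norm_pos_iff.mpr hc
    have hxT : x ∈ closure (A : Set (H2 →L[ℂ] H2)) := hCT (hJC hxJ)
    obtain ⟨w, hwA, hw⟩ := Metric.mem_closure_iff.mp hxT (‖c‖ / 4) (by positivity)
    rw [dist_eq_norm] at hw
    obtain ⟨L0, hL0⟩ := auxP_adjoin f N hN Sg hSg w hwA m' m
    set L := L0 + m' + m + a + b with hL
    have ha : a < N ^ (L - m') := lt_of_lt_of_le (Nat.lt_pow_self (by omega))
      (Nat.pow_le_pow_right (by omega) (by omega))
    have hb : b < N ^ (L - m) := lt_of_lt_of_le (Nat.lt_pow_self (by omega))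
      (Nat.pow_le_pow_right (by omega) (by omega))
    obtain ⟨U, hUT, hUQ, hUn, hUf⟩ := hU (L - m') a m' ha
    obtain ⟨V, hVT, hVQ, hVn, hVf⟩ := hU (L - m) b m hb
    rw [show m' + (L - m') = L by omega] at hUQ hUf
    rw [show m + (L - m) = L by omega] at hVQ hVf
    set cw := inner ℂ (f (m', a)) (w (f (m, b))) with hcw
    have hwQ : star U * w * V = cw • Q L := by
      apply aux_opext f
      intro n q
      apply aux_vext f
      rintro ⟨n', q'⟩
      rw [mul_apply_eq_comp, mul_apply_eq_comp, aux_mulstar, hUf, hVf,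
        smul_apply, hQf, inner_smul_right]
      by_cases h1 : n = L
      · by_cases h2 : n' = L
        · simp only [h1, h2, if_true, aux_inner_s15, Prod.mk.injEq, true_and]
          rw [hL0 L (by omega) a b q' q ha hb]
          split_ifs <;> simp [hcw]
        · simp only [h1, h2, if_true, if_false, aux_inner_s15, Prod.mk.injEq, false_and,
            inner_zero_left, mul_zero]
      · simp [h1]
    have hUx : star U * x * V ∈ J := by
      have : star U * x * V = (Q L * star U) * x * (V * Q L) := by
        rw [hVQ]
        have := congrArg star hUQ
        rw [star_mul, hQs] at this
        rw [this]
      rw [this]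
      exact (hJm _ (hCl _ hVT _ (hQC L)) _
        (hJm _ (hCr _ (star_mem hUT) _ (hQC L)) _ hxJ).1).2
    have hn1 : ‖star U * x * V - cw • Q L‖ ≤ ‖x - w‖ := by
      rw [← hwQ, ← sub_mul, ← mul_sub]
      calc _ ≤ ‖star U‖ * ‖x - w‖ * ‖V‖ := (norm_mul_le _ _).trans
              (mul_le_mul_of_nonneg_right (norm_mul_le _ _) (norm_nonneg _))
        _ ≤ 1 * ‖x - w‖ * 1 := by
            rw [norm_star]
            gcongr
        _ = _ := by ring
    have hn2 : ‖cw - c‖ ≤ ‖x - w‖ := by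
      rw [hcw, hcdef, ← inner_sub_right, ← sub_apply]
      calc _ ≤ ‖f (m', a)‖ * ‖(w - x) (f (m, b))‖ := norm_inner_le_norm _ _
        _ ≤ ‖f (m', a)‖ * (‖w - x‖ * ‖f (m, b)‖) := by
            gcongr; exact ContinuousLinearMap.le_opNorm _ _
        _ = ‖x - w‖ := by rw [f.orthonormal.1, f.orthonormal.1, norm_sub_rev]; ring
    set y := c⁻¹ • (star U * x * V) with hy
    have hyJ : y ∈ J := hJsm _ _ hUx
    set d := Q L - y with hd
    have hdn : ‖d‖ < 1 := by
      have : d = c⁻¹ • (-((star U * x * V - cw • Q L) + (cw - c) • Q L)) := by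
        rw [hd, hy, sub_smul]
        have : Q L = c⁻¹ • (c • Q L) := by rw [smul_smul, inv_mul_cancel₀ hc, one_smul]
        conv_lhs => rw [this]
        rw [← smul_sub]
        congr 1
        abel
      rw [this, norm_smul, norm_neg, norm_inv, inv_mul_lt_iff₀ hcpos, mul_one]
      calc _ ≤ ‖star U * x * V - cw • Q L‖ + ‖(cw - c) • Q L‖ := norm_add_le _ _
        _ ≤ ‖x - w‖ + ‖x - w‖ * 1 := by
          rw [norm_smul]
          gcongr
          exact hQn L
        _ < ‖c‖ := by linarith
    have hdC : d ∈ C := by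
      have : d = Q L + (-1 : ℂ) • y := by rw [hd, neg_one_smul, sub_eq_add_neg]
      rw [this]
      exact hCadd _ (hQC L) _ (hCsm _ _ (hJC hyJ))
    have hdQ : d * Q L = d := by
      rw [hd, hy, sub_mul, hQi, smul_mul_assoc, mul_assoc, hVQ]
    have hpow : ∀ n : ℕ, Q L - d ^ (n + 1) ∈ J := by
      intro n
      induction n with
      | zero => 
        rw [zero_add, pow_one, hd, sub_sub_cancel]
        exact hyJ
      | succ n ih =>
        have h1 : d * (Q L - d ^ (n + 1)) ∈ J := (hJm d hdC _ ih).1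
        rw [mul_sub, hdQ, ← pow_succ'] at h1
        have h2 := hJadd _ hyJ _ h1
        have : y + (d - d ^ (n + 1 + 1)) = Q L - d ^ (n + 1 + 1) := by rw [hd]; abel
        rwa [this] at h2
    refine ⟨L, ?_⟩
    have hlim : Filter.Tendsto (fun n : ℕ => Q L - d ^ (n + 1)) Filter.atTop (nhds (Q L - 0)) :=
      Filter.Tendsto.sub tendsto_const_nhds
        ((tendsto_pow_atTop_nhds_zero_of_norm_lt_one hdn).comp (Filter.tendsto_add_atTop_nat 1))
    rw [sub_zero] at hlim
    exact hJcl.mem_of_tendsto hlim (Filter.Eventually.of_forall hpow)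
  obtain ⟨L, hLJ⟩ := hmain
  have hPJ : Q 0 ∈ J := by rw [hQ0]; exact hdown L hLJ
  apply Set.Subset.antisymm hJC
  intro z hz
  let K : Set (H2 →L[ℂ] H2) := {x | x ∈ T ∧ ∀ t ∈ T, ∀ s ∈ T, t * x * s ∈ J}
  have hK : IsClosedIdealOf (T : Set (H2 →L[ℂ] H2)) K := by
    refine ⟨?_, fun x hx => hx.1, ⟨zero_mem _, fun t _ s _ => by simpa using hJ0⟩, ?_, ?_, ?_⟩
    · have : K = (T : Set (H2 →L[ℂ] H2)) ∩
          ⋂ t ∈ T, ⋂ s ∈ T, (fun x : H2 →L[ℂ] H2 => t * x * s) ⁻¹' J := by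
        ext x
        simp [K]
      rw [this]
      refine hTcl.inter (isClosed_biInter fun t _ => isClosed_biInter fun s _ =>
        hJcl.preimage (by fun_prop))
    · intro x hx y hy
      refine ⟨add_mem hx.1 hy.1, fun t ht s hs => ?_⟩
      rw [mul_add, add_mul]
      exact hJadd _ (hx.2 t ht s hs) _ (hy.2 t ht s hs)
    · intro c x hx
      refine ⟨SMulMemClass.smul_mem c hx.1, fun t ht s hs => ?_⟩
      rw [mul_smul_comm, smul_mul_assoc]
      exact hJsm _ _ (hx.2 t ht s hs)
    · intro r hr x hx
      refine ⟨⟨mul_mem hr hx.1, fun t ht s hs => ?_⟩, ⟨mul_mem hx.1 hr, fun t ht s hs => ?_⟩⟩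
      · rw [← mul_assoc]
        exact hx.2 _ (mul_mem ht hr) s hs
      · rw [← mul_assoc, mul_assoc]
        exact hx.2 t ht _ (mul_mem hr hs)
  have hzK : z ∈ K := hz K ⟨hK, hPiT, fun t ht s hs => by
    have := hTQT 0 hPJ t ht s hs
    rwa [hQ0] at this⟩
  simpa using hzK.2 1 h1T 1 h1T
end
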